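/- arXiv:2004.10521 — 5 statements merged into one kernel-verified Lean document; each statement's English description precedes it below -/
import Mathlib

section
/- Let U and V be two distinct vertices of H^1 and let W be a set with L ⊆ W ⊆ V(H^1)\{U,V}. Then U ⊥_{H^0} V | W if and only if U ⊥_{H^1} V | W (i.e., every path between U and V in H^0 intersects W if and only if every path between U and V in H^1 intersects W). -/
open Relation Set

namespace CausalGraph

variable {V : Type*} [Fintype V] [DecidableEq V]

/-- `p` is a path in the undirected sense from `u` to `v` along adjacency `Adj`:
a nonempty list of pairwise distinct vertices, consecutive ones adjacent,
starting at `u` and ending at `v`. -/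
def IsPath (Adj : V → V → Prop) (u v : V) (p : List V) : Prop :=
  List.Chain' Adj p ∧ p.head? = some u ∧ p.getLast? = some v ∧ p.Nodup

/-- Ancestors of `S` in the digraph `D` (every vertex is an ancestor of itself). -/
def anc (D : V → V → Prop) (S : Set V) : Set V :=
  {u | ∃ v ∈ S, Relation.ReflTransGen D u v}

/-- Descendants of `S` in the digraph `D` (every vertex is a descendant of itself). -/
def desc (D : V → V → Prop) (S : Set V) : Set V :=
  {u | ∃ v ∈ S, Relation.ReflTransGen D v u}

/-- Parents of vertices of `S` in the digraph `D`. -/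
def parents (D : V → V → Prop) (S : Set V) : Set V :=
  {u | ∃ v ∈ S, D u v}

/-- The digraph `D` is acyclic. -/
def Acyclic (D : V → V → Prop) : Prop :=
  ∀ u v, D u v → ¬ Relation.ReflTransGen D v u

/-- Vertices other than `A` lying on a directed path from `A` to `Y`. -/
def cn (D : V → V → Prop) (A Y : V) : Set V :=
  {v | v ≠ A ∧ Relation.ReflTransGen D A v ∧ Relation.ReflTransGen D v Y}

/-- The forbidden set. -/
def forb (D : V → V → Prop) (A Y : V) : Set V :=
  desc D (cn D A Y) ∪ {A}

/-- Proper back-door graph: delete every edge from `A` into `cn D A Y`. -/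
def pbd (D : V → V → Prop) (A Y : V) : V → V → Prop :=
  fun u v => D u v ∧ ¬(u = A ∧ v ∈ cn D A Y)

/-- `y` is an interior vertex of the list `p` with neighbours `x` and `z` on the path. -/
def InteriorAt (p : List V) (x y z : V) : Prop :=
  ∃ s t : List V, p = s ++ x :: y :: z :: t

/-- The path `p` is blocked by `Z` in the digraph `D`: some interior non-collider
lies in `Z`, or some interior collider has no descendant in `Z`. -/
def Blocked (D : V → V → Prop) (Z : Set V) (p : List V) : Prop :=
  (∃ x y z, InteriorAt p x y z ∧ ¬(D x y ∧ D z y) ∧ y ∈ Z) ∨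
  (∃ x y z, InteriorAt p x y z ∧ (D x y ∧ D z y) ∧ ∀ d ∈ desc D {y}, d ∉ Z)

/-- d-separation of `S` and `T` given `Z` in the digraph `D`. -/
def DSep (D : V → V → Prop) (S T Z : Set V) : Prop :=
  ∀ s ∈ S, ∀ t ∈ T, ∀ p : List V,
    IsPath (fun a b => D a b ∨ D b a) s t p → Blocked D Z p

/-- Moral graph of the subgraph of the digraph `D` induced on `Vs`. -/
def moral (D : V → V → Prop) (Vs : Set V) : SimpleGraph V :=
  SimpleGraph.fromRel (fun u v =>
    u ∈ Vs ∧ v ∈ Vs ∧ (D u v ∨ D v u ∨ ∃ w ∈ Vs, D u w ∧ D v w))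

/-- Separation in an undirected graph: every path from `S` to `T` meets `W`. -/
def USep (H : SimpleGraph V) (S T W : Set V) : Prop :=
  ∀ s ∈ S, ∀ t ∈ T, ∀ p : List V, IsPath H.Adj s t p → ∃ z ∈ W, z ∈ p

/-- `Z` is an `A`–`Y` cut in an undirected graph `H` with vertex set `Vs`. -/
def IsCut (Vs : Set V) (H : SimpleGraph V) (A Y : V) (Z : Set V) : Prop :=
  Z ⊆ Vs ∧ Z ∩ {A, Y} = ∅ ∧ ∀ p : List V, IsPath H.Adj A Y p → ∃ z ∈ Z, z ∈ p

def MinimalCut (Vs : Set V) (H : SimpleGraph V) (A Y : V) (Z : Set V) : Prop :=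
  IsCut Vs H A Y Z ∧ ∀ Z' ⊂ Z, ¬ IsCut Vs H A Y Z'

def MinimumCut (Vs : Set V) (H : SimpleGraph V) (A Y : V) (Z : Set V) : Prop :=
  IsCut Vs H A Y Z ∧ ∀ Z', IsCut Vs H A Y Z' → Z.ncard ≤ Z'.ncard

/-- Connected component of `y` in `H` restricted to the complement of `U`:
vertices reachable from `y` by paths avoiding `U`. -/
def cc (H : SimpleGraph V) (U : Set V) (y : V) : Set V :=
  {w | ∃ p : List V, IsPath H.Adj y w p ∧ ∀ x ∈ p, x ∉ U}

/-- Boundary of `S` in `H`: vertices outside `S` adjacent to some vertex of `S`. -/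
def bdry (H : SimpleGraph V) (S : Set V) : Set V :=
  {v | v ∉ S ∧ ∃ u ∈ S, H.Adj v u}

/-- The partial order `Z₁ ⊴_H Z₂` between `A`–`Y` cuts. -/
def TLE (H : SimpleGraph V) (A Y : V) (Z₁ Z₂ : Set V) : Prop :=
  USep H {Y} (Z₂ \ Z₁) Z₁ ∧ USep H {A} (Z₁ \ Z₂) Z₂

/-- Ancestors of `{A, Y} ∪ L`. -/
def ancAYL (D : V → V → Prop) (A Y : V) (L : Set V) : Set V :=
  anc D ({A, Y} ∪ L)

/-- The moral graph `H⁰` of the proper back-door graph induced on `an_G({A,Y} ∪ L)`. -/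
def H0 (D : V → V → Prop) (A Y : V) (L : Set V) : SimpleGraph V :=
  moral (pbd D A Y) (ancAYL D A Y L)

/-- The set of vertices removed from `H⁰` when constructing `H¹`. -/
def Ignore (D : V → V → Prop) (A Y : V) (L N : Set V) : Set V :=
  (ancAYL D A Y L \ {A, Y}) ∩ ((Set.univ \ N) ∪ forb D A Y)

/-- Vertex set of `H¹`. -/
def H1verts (D : V → V → Prop) (A Y : V) (L N : Set V) : Set V :=
  ancAYL D A Y L \ Ignore D A Y L N

/-- The non-parametric adjustment efficiency graph `H¹`: delete the vertices of
`Ignore`, join two remaining vertices if they are joined in `H⁰` by a path all of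
whose intermediate vertices are in `Ignore`, and join `A` and `Y` to every vertex
of `L`. -/
def H1 (D : V → V → Prop) (A Y : V) (L N : Set V) : SimpleGraph V :=
  SimpleGraph.fromRel (fun u v =>
    u ∈ H1verts D A Y L N ∧ v ∈ H1verts D A Y L N ∧
      ((∃ p : List V, IsPath (H0 D A Y L).Adj u v p ∧
          ∀ x ∈ p, x ≠ u → x ≠ v → x ∈ Ignore D A Y L N) ∨
        (u = A ∧ v ∈ L) ∨ (u = Y ∧ v ∈ L)))

/-- The graphical adjustment criterion for `A, Y, L, N` in the DAG `D`. -/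
def GAC (D : V → V → Prop) (A Y : V) (L N Z : Set V) : Prop :=
  DSep (pbd D A Y) {A} {Y} Z ∧ Z ∩ forb D A Y = ∅ ∧ L ⊆ Z ∧ Z ⊆ N

def MinimalGAC (D : V → V → Prop) (A Y : V) (L N Z : Set V) : Prop :=
  GAC D A Y L N Z ∧ ∀ Z' ⊂ Z, ¬ GAC D A Y L N Z'

def MinimumGAC (D : V → V → Prop) (A Y : V) (L N Z : Set V) : Prop :=
  GAC D A Y L N Z ∧ ∀ Z', GAC D A Y L N Z' → Z.ncard ≤ Z'.ncard

/-- Graphical admissibility of the pair `(L, N)`. -/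
def Admissible (D : V → V → Prop) (A Y : V) (L N : Set V) : Prop :=
  ∃ Z, GAC D A Y L N Z

end CausalGraph

namespace CausalGraph

theorem path_of_rtg {V : Type*} [Fintype V] [DecidableEq V] (H : SimpleGraph V) (P : V → Prop)
    {u v : V} (hu : P u)
    (h : Relation.ReflTransGen (fun a b => H.Adj a b ∧ P a ∧ P b) u v) :
    ∃ p, IsPath H.Adj u v p ∧ ∀ x ∈ p, P x := by
  have hw : ∃ w : H.Walk u v, ∀ x ∈ w.support, P x := by
    induction h with
    | refl => exact ⟨SimpleGraph.Walk.nil, by simpa using hu⟩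
    | tail _ hbc ih =>
      obtain ⟨w, hw⟩ := ih
      refine ⟨w.concat hbc.1, ?_⟩
      intro x hx
      rw [SimpleGraph.Walk.support_concat] at hx
      simp at hx
      rcases hx with hx | rfl
      · exact hw x hx
      · exact hbc.2.2
  obtain ⟨w, hw⟩ := hw
  refine ⟨(w.bypass).support, ⟨?_, ?_, ?_, ?_⟩, ?_⟩
  · exact w.bypass.isChain_adj_support
  · rw [List.head?_eq_some_head (by simp)]; simp
  · rw [List.getLast?_eq_some_getLast (by simp)]; simp
  · exact w.bypass_isPath.support_nodup
  · intro x hx; exact hw x (w.support_bypass_subset hx)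

theorem rtg_of_path {V : Type*} [Fintype V] [DecidableEq V] (H : SimpleGraph V) (P : V → Prop)
    {u v : V} {p : List V} (h : IsPath H.Adj u v p) (hP : ∀ x ∈ p, P x) :
    Relation.ReflTransGen (fun a b => H.Adj a b ∧ P a ∧ P b) u v := by
  obtain ⟨hc, hh, hl, -⟩ := h
  induction p generalizing u with
  | nil => simp at hh
  | cons a t ih =>
    simp at hh
    subst hh
    cases t with
    | nil => simp at hl; subst hl; exact .refl
    | cons b t =>
      have hc' := List.isChain_cons_cons.1 hc
      exact Relation.ReflTransGen.head ⟨hc'.1, hP _ (by simp), hP _ (by simp)⟩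
        (ih (fun x hx => hP x (List.mem_cons_of_mem _ hx)) hc'.2 (by simp) (by simpa using hl))

theorem usep_iff {V : Type*} [Fintype V] [DecidableEq V] (H : SimpleGraph V) (W : Set V)
    {u v : V} (hu : u ∉ W) : USep H {u} {v} W ↔
    ¬ Relation.ReflTransGen (fun a b => H.Adj a b ∧ a ∉ W ∧ b ∉ W) u v := by
  constructor
  · intro h hr
    obtain ⟨p, hp, hW⟩ := path_of_rtg H (fun x => x ∉ W) hu hr
    obtain ⟨z, hz, hzp⟩ := h u rfl v rfl p hp
    exact hW z hzp hz
  · rintro h s rfl t rfl p hp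
    by_contra hcon
    push Not at hcon
    exact h (rtg_of_path H (fun x => x ∉ W) hp (fun x hx hxW => hcon x hxW hx))

/-- Lemma 3 (statement 0): for vertices `u ≠ v` of `H¹` and `L ⊆ W ⊆ V(H¹) \ {u, v}`,
`u ⊥_{H⁰} v | W` if and only if `u ⊥_{H¹} v | W`. -/
theorem stmt0 {V : Type*} [Fintype V] [DecidableEq V]
    (D : V → V → Prop) (hacy : Acyclic D)
    (A Y : V) (L N : Set V)
    (hAY : A ≠ Y) (hAancY : Relation.ReflTransGen D A Y)
    (hLnd : L ∩ desc D {A} = ∅) (hLY : Y ∉ L)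
    (hN : {A, Y} ∪ L ⊆ N)
    (u v : V) (huv : u ≠ v)
    (hu : u ∈ H1verts D A Y L N) (hv : v ∈ H1verts D A Y L N)
    (W : Set V) (hLW : L ⊆ W) (hW : W ⊆ H1verts D A Y L N \ {u, v}) :
    USep (H0 D A Y L) {u} {v} W ↔ USep (H1 D A Y L N) {u} {v} W := by
  have huW : u ∉ W := fun h => (hW h).2 (by simp)
  rw [usep_iff _ _ huW, usep_iff _ _ huW, not_iff_not]
  have hIW : ∀ x ∈ Ignore D A Y L N, x ∉ W := fun x hx hxW => (hW hxW).1.2 hx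
  constructor
  · intro h
    have key : ∃ z ∈ H1verts D A Y L N, z ∉ W ∧
        Relation.ReflTransGen (fun a b => (H1 D A Y L N).Adj a b ∧ a ∉ W ∧ b ∉ W) u z ∧
        (v = z ∨ v ∈ Ignore D A Y L N) ∧
        Relation.ReflTransGen (fun a b => (H0 D A Y L).Adj a b ∧
          (a = z ∨ a ∈ Ignore D A Y L N) ∧ (b = z ∨ b ∈ Ignore D A Y L N)) z v := by
      clear hv hW huv
      induction h with
      | refl => exact ⟨u, hu, huW, .refl, Or.inl rfl, .refl⟩
      | @tail b c _ hbc ih =>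
        obtain ⟨z, hz, hzW, h1, hb, h0⟩ := ih
        by_cases hc : c ∈ Ignore D A Y L N
        · exact ⟨z, hz, hzW, h1, Or.inr hc, h0.tail ⟨hbc.1, hb, Or.inr hc⟩⟩
        · have hcV : c ∈ H1verts D A Y L N := by
            refine ⟨?_, hc⟩
            have := hbc.1
            simp only [H0, moral, SimpleGraph.fromRel_adj] at this
            tauto
          refine ⟨c, hcV, hbc.2.2, ?_, Or.inl rfl, .refl⟩
          by_cases hzc : z = c
          · exact hzc ▸ h1
          · refine h1.tail ⟨?_, hzW, hbc.2.2⟩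
            have h0' : Relation.ReflTransGen (fun a b => (H0 D A Y L).Adj a b ∧
                (a ≠ z → a ≠ c → a ∈ Ignore D A Y L N) ∧
                (b ≠ z → b ≠ c → b ∈ Ignore D A Y L N)) z c := by
              refine Relation.ReflTransGen.tail (b := b)
                (Relation.ReflTransGen.mono ?_ _ _ h0) ⟨hbc.1, ?_, ?_⟩
              · rintro a b ⟨h, h2, h3⟩
                exact ⟨h, by tauto, by tauto⟩
              · tauto
              · tauto
            obtain ⟨p, hp, hp'⟩ := path_of_rtg (H0 D A Y L)
              (fun x => x ≠ z → x ≠ c → x ∈ Ignore D A Y L N) (by tauto) h0'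
            rw [H1, SimpleGraph.fromRel_adj]
            exact ⟨hzc, Or.inl ⟨hz, hcV, Or.inl ⟨p, hp, hp'⟩⟩⟩
    obtain ⟨z, hz, hzW, h1, hb, h0⟩ := key
    rcases hb with rfl | hb
    · exact h1
    · exact absurd hb hv.2
  · intro h
    have step : ∀ a b, a ∉ W → b ∉ W → (∃ p : List V, IsPath (H0 D A Y L).Adj a b p ∧
          ∀ x ∈ p, x ≠ a → x ≠ b → x ∈ Ignore D A Y L N) →
        Relation.ReflTransGen (fun a b => (H0 D A Y L).Adj a b ∧ a ∉ W ∧ b ∉ W) a b := by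
      rintro a b ha hb ⟨p, hp, hp'⟩
      refine rtg_of_path (H0 D A Y L) (fun x => x ∉ W) hp fun x hx => ?_
      by_cases hxa : x = a
      · exact hxa ▸ ha
      by_cases hxb : x = b
      · exact hxb ▸ hb
      exact hIW x (hp' x hx hxa hxb)
    have hsymm : ∀ a b, Relation.ReflTransGen
        (fun a b => (H0 D A Y L).Adj a b ∧ a ∉ W ∧ b ∉ W) a b → Relation.ReflTransGen
        (fun a b => (H0 D A Y L).Adj a b ∧ a ∉ W ∧ b ∉ W) b a := by
      intro a b h
      induction h with
      | refl => exact .refl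
      | tail _ hbc ih => exact .head ⟨hbc.1.symm, hbc.2.2, hbc.2.1⟩ ih
    clear hv hW huv
    induction h with
    | refl => exact .refl
    | @tail b c _ hbc ih =>
      obtain ⟨hadj, hbW, hcW⟩ := hbc
      rw [H1, SimpleGraph.fromRel_adj] at hadj
      refine ih.trans ?_
      rcases hadj.2 with ⟨_, _, h | h | h⟩ | ⟨_, _, h | h | h⟩
      · exact step _ _ hbW hcW h
      · exact absurd (hLW h.2) hcW
      · exact absurd (hLW h.2) hcW
      · exact hsymm _ _ (step _ _ hcW hbW h)
      · exact absurd (hLW h.2) hbW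
      · exact absurd (hLW h.2) hbW

end CausalGraph
end

section
/- Suppose (L,N) is graphically admissible. Then the vertex set of H^1 equals (an_G({A,Y}∪L) ∩ N) \ (forb(A,Y,G)\{A,Y}), and every A–Y cut Z in H^1 satisfies L ⊆ Z ⊆ V(H^1). -/
open Relation Set

namespace CausalGraph

/-- Lemma 4 (statement 1): if `(L, N)` is admissible, the vertex set of `H¹` equals
`(an_G({A,Y} ∪ L) ∩ N) \ (forb(A,Y,G) \ {A,Y})`, and every `A`–`Y` cut `Z` in `H¹`
satisfies `L ⊆ Z ⊆ V(H¹)`. -/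
theorem stmt1 {V : Type*} [Fintype V] [DecidableEq V]
    (D : V → V → Prop) (hacy : Acyclic D)
    (A Y : V) (L N : Set V)
    (hAY : A ≠ Y) (hAancY : Relation.ReflTransGen D A Y)
    (hLnd : L ∩ desc D {A} = ∅) (hLY : Y ∉ L)
    (hN : {A, Y} ∪ L ⊆ N)
    (hadm : Admissible D A Y L N) :
    H1verts D A Y L N = (ancAYL D A Y L ∩ N) \ (forb D A Y \ {A, Y}) ∧
    ∀ Z, IsCut (H1verts D A Y L N) (H1 D A Y L N) A Y Z →
      L ⊆ Z ∧ Z ⊆ H1verts D A Y L N := by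
  have hAN : A ∈ N := hN (by simp)
  have hYN : Y ∈ N := hN (by simp)
  refine ⟨?_, ?_⟩
  · ext x
    simp only [H1verts, Ignore, mem_diff, mem_inter_iff, mem_union, mem_univ, true_and,
      mem_insert_iff, mem_singleton_iff]
    have h1 : x = A → x ∈ N := fun h => h ▸ hAN
    have h2 : x = Y → x ∈ N := fun h => h ▸ hYN
    tauto
  · rintro Z ⟨hZs, hZd, hZp⟩
    refine ⟨?_, hZs⟩
    intro l hl
    obtain ⟨W, -, hWf, hLW, -⟩ := hadm
    have hlf : l ∉ forb D A Y := fun h => by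
      have : l ∈ W ∩ forb D A Y := ⟨hLW hl, h⟩
      rw [hWf] at this
      exact this
    have hlN : l ∈ N := hN (Or.inr hl)
    have hlA : l ≠ A := fun h => hlf (Or.inr h)
    have hlY : l ≠ Y := fun h => hLY (h ▸ hl)
    have hlV : l ∈ H1verts D A Y L N :=
      ⟨⟨l, Or.inr hl, Relation.ReflTransGen.refl⟩, fun h => h.2.elim (fun h => h.2 hlN) hlf⟩
    have hAV : A ∈ H1verts D A Y L N :=
      ⟨⟨A, by simp, Relation.ReflTransGen.refl⟩, fun h => h.1.2 (by simp)⟩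
    have hYV : Y ∈ H1verts D A Y L N :=
      ⟨⟨Y, by simp, Relation.ReflTransGen.refl⟩, fun h => h.1.2 (by simp)⟩
    have e1 : (H1 D A Y L N).Adj A l := by
      rw [H1, SimpleGraph.fromRel_adj]
      exact ⟨hlA.symm, Or.inl ⟨hAV, hlV, Or.inr (Or.inl ⟨rfl, hl⟩)⟩⟩
    have e2 : (H1 D A Y L N).Adj l Y := by
      rw [H1, SimpleGraph.fromRel_adj]
      exact ⟨hlY, Or.inr ⟨hYV, hlV, Or.inr (Or.inr ⟨rfl, hl⟩)⟩⟩
    obtain ⟨z, hz, hzp⟩ := hZp [A, l, Y] ⟨by simp [List.Chain', e1, e2], rfl, rfl, by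
      simp [hlA.symm, hlY, hAY]⟩
    have hne : z ∉ ({A, Y} : Set V) := fun h => by
      have : z ∈ Z ∩ {A, Y} := ⟨hz, h⟩
      rw [hZd] at this
      exact this
    simp only [mem_insert_iff, mem_singleton_iff, not_or] at hne
    simp only [List.mem_cons, List.not_mem_nil, or_false] at hzp
    rcases hzp with h | h | h
    · exact absurd h hne.1
    · exact h ▸ hz
    · exact absurd h hne.2


end CausalGraph
end

section
/- If Z is an A–Y cut in H^1, then Z satisfies the graphical adjustment criterion for A,Y,L,N in G (that is, A and Y are d-separated by Z in G^pbd(A,Y), Z ∩ forb(A,Y,G) = ∅, and L ⊆ Z ⊆ N). -/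
open Relation Set

namespace CausalGraph

theorem exists_isPath {V : Type*} {R : V → V → Prop} {u v : V}
    (h : Relation.ReflTransGen R u v) : ∃ p, IsPath R u v p := by
  induction h using Relation.ReflTransGen.head_induction_on with
  | refl => exact ⟨[v], by simp [IsPath, List.Chain']⟩
  | @head a b hab _ ih =>
    obtain ⟨p, h1, h2, h3, h4⟩ := ih
    by_cases ha : a ∈ p
    · obtain ⟨s, t, rfl⟩ := List.append_of_mem ha
      refine ⟨a :: t, ?_, rfl, ?_, ?_⟩
      · exact (List.isChain_append.1 h1).2.1
      · simpa using h3
      · exact (List.nodup_append.1 h4).2.1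
    · cases p with
      | nil => simp at h2
      | cons c t =>
        simp only [List.head?_cons, Option.some.injEq] at h2
        subst h2
        refine ⟨a :: c :: t, ?_, rfl, ?_, ?_⟩
        · exact List.isChain_cons_cons.2 ⟨hab, h1⟩
        · simpa using h3
        · exact List.nodup_cons.2 ⟨ha, h4⟩

theorem chain_mem {V : Type*} {R : V → V → Prop} (p : List V) :
    ∀ u, List.IsChain R (u :: p) → ∀ x ∈ u :: p, x = u ∨ ∃ w, R w x := by
  induction p with
  | nil => intro u _ x hx; simp at hx; exact Or.inl hx
  | cons b t ih =>
    intro u h x hx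
    rw [List.isChain_cons_cons] at h
    rcases List.mem_cons.1 hx with rfl | hx
    · exact Or.inl rfl
    · rcases ih b h.2 x hx with rfl | h'
      · exact Or.inr ⟨u, h.1⟩
      · exact Or.inr h'

theorem isPath_mem {V : Type*} {R : V → V → Prop} {u v : V} {p : List V}
    (h : IsPath R u v p) : ∀ x ∈ p, x = u ∨ ∃ w, R w x := by
  obtain ⟨h1, h2, -, -⟩ := h
  cases p with
  | nil => simp at h2
  | cons c t =>
    simp only [List.head?_cons, Option.some.injEq] at h2
    subst h2
    exact chain_mem t c h1

theorem isPath_mono {V : Type*} {R S : V → V → Prop} (hRS : ∀ a b, R a b → S a b) {u v : V}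
    {p : List V} (h : IsPath R u v p) : IsPath S u v p :=
  ⟨List.IsChain.imp hRS h.1, h.2⟩

theorem InteriorAt.cons' {V : Type*} {l : List V} {x y z : V} (a : V)
    (h : InteriorAt l x y z) : InteriorAt (a :: l) x y z := by
  obtain ⟨s, t, rfl⟩ := h
  exact ⟨a :: s, t, rfl⟩

theorem dir_mem {V : Type*} {E : V → V → Prop} {Vs : Set V}
    (hanc : ∀ a b, E a b → b ∈ Vs → a ∈ Vs) (t : List V) : ∀ a b,
    List.IsChain (fun a b => E a b ∨ E b a) (a :: b :: t) →
    (∀ y, (a :: b :: t).getLast? = some y → y ∈ Vs) →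
    (∀ x y z, InteriorAt (a :: b :: t) x y z → E x y → E z y → y ∈ Vs) →
    E a b → b ∈ Vs := by
  induction t with
  | nil => intro a b _ hl _ _; exact hl b (by simp)
  | cons c t ih =>
    intro a b hc hl hi hab
    rw [List.isChain_cons_cons] at hc
    rcases (List.isChain_cons_cons.1 hc.2).1 with h | h
    · exact hanc b c h (ih b c hc.2 (by simpa using hl)
        (fun x y z h => hi x y z (h.cons' a)) h)
    · exact hi a b c ⟨[], t, rfl⟩ hab h

theorem all_mem {V : Type*} {E : V → V → Prop} {Vs : Set V}
    (hanc : ∀ a b, E a b → b ∈ Vs → a ∈ Vs) (t : List V) : ∀ a, a ∈ Vs →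
    List.IsChain (fun a b => E a b ∨ E b a) (a :: t) →
    (∀ y, (a :: t).getLast? = some y → y ∈ Vs) →
    (∀ x y z, InteriorAt (a :: t) x y z → E x y → E z y → y ∈ Vs) →
    ∀ x ∈ a :: t, x ∈ Vs := by
  induction t with
  | nil => intro a ha _ _ _ x hx; simp at hx; exact hx ▸ ha
  | cons b t ih =>
    intro a ha hc hl hi x hx
    have hb : b ∈ Vs := by
      rcases (List.isChain_cons_cons.1 hc).1 with h | h
      · exact dir_mem hanc t a b hc hl hi h
      · exact hanc b a h ha
    rcases List.mem_cons.1 hx with rfl | hx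
    · exact ha
    · exact ih b hb (List.isChain_cons_cons.1 hc).2 (by simpa using hl)
        (fun x y z h => hi x y z (h.cons' a)) x hx

theorem moral_reach {V : Type*} {E : V → V → Prop} {Vs Z : Set V}
    (hac : ∀ a b, E a b → ¬ E b a) (v : V) (hv : v ∉ Z) (n : ℕ) : ∀ (t : List V) (a : V),
    t.length ≤ n → (∀ x ∈ a :: t, x ∈ Vs) →
    List.IsChain (fun a b => E a b ∨ E b a) (a :: t) →
    (a :: t).getLast? = some v → (a :: t).Nodup →
    (∀ x y z, InteriorAt (a :: t) x y z → ¬ (E x y ∧ E z y) → y ∉ Z) →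
    Relation.ReflTransGen (fun a b => (moral E Vs).Adj a b ∧ b ∉ Z) a v := by
  induction n with
  | zero =>
    intro t a ht _ _ hl _ _
    have : t = [] := by simpa using ht
    subst this
    simp at hl
    subst hl
    exact .refl
  | succ n ih =>
    intro t a ht hm hc hl hn hi
    match t, ht, hm, hc, hl, hn, hi with
    | [], _, _, _, hl, _, _ =>
      simp at hl
      subst hl
      exact .refl
    | [b], _, hm, hc, hl, hn, hi =>
      simp at hl
      subst hl
      refine .single ⟨?_, hv⟩
      have h := (List.isChain_cons_cons.1 hc).1
      simp only [moral, SimpleGraph.fromRel_adj]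
      refine ⟨by simpa using hn, Or.inl ⟨hm _ (by simp), hm _ (by simp), ?_⟩⟩
      tauto
    | b :: c :: t, ht, hm, hc, hl, hn, hi =>
      have h := List.isChain_cons_cons.1 hc
      have h' := List.isChain_cons_cons.1 h.2
      have hn' := List.nodup_cons.1 hn
      have hn'' := List.nodup_cons.1 hn'.2
      by_cases hcol : E a b ∧ E c b
      · refine .head (b := c) ⟨?_, ?_⟩ (ih t c (by simp at ht ⊢; omega)
          (fun x hx => hm x (by simp at hx ⊢; tauto)) h'.2 (by simpa using hl) hn''.2
          (fun x y z h => hi x y z ((h.cons' b).cons' a)))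
        · simp only [moral, SimpleGraph.fromRel_adj]
          refine ⟨fun e => hn'.1 (by simp [e]), Or.inl ⟨hm _ (by simp), hm _ (by simp),
            Or.inr (Or.inr ⟨b, hm _ (by simp), hcol⟩)⟩⟩
        · cases t with
          | nil => simp at hl; exact hl ▸ hv
          | cons d t =>
            exact hi b c d ⟨[a], t, rfl⟩ (fun h => hac _ _ hcol.2 h.1)
      · refine .head (b := b) ⟨?_, hi a b c ⟨[], t, rfl⟩ hcol⟩ (ih (c :: t) b
          (by simp at ht ⊢; omega)
          (fun x hx => hm x (List.mem_cons_of_mem _ hx)) h.2 (by simpa using hl) hn'.2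
          (fun x y z h => hi x y z (h.cons' a)))
        simp only [moral, SimpleGraph.fromRel_adj]
        have h1 := h.1
        refine ⟨fun e => hn'.1 (by simp [e]), Or.inl ⟨hm _ (by simp), hm _ (by simp), ?_⟩⟩
        tauto

theorem H1_reach {V : Type*} (D : V → V → Prop) (A Y : V) (L N Z : Set V) {x : V}
    (h : Relation.ReflTransGen (fun a b => (H0 D A Y L).Adj a b ∧ b ∉ Z) A x) :
    ∃ u, u ∈ H1verts D A Y L N ∧
      Relation.ReflTransGen (fun a b => (H1 D A Y L N).Adj a b ∧ b ∉ Z) A u ∧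
      Relation.ReflTransGen (fun a b => (H0 D A Y L).Adj a b ∧ b ∈ Ignore D A Y L N) u x ∧
      (x ∉ Ignore D A Y L N → u = x) := by
  induction h with
  | refl =>
    refine ⟨A, ⟨⟨A, by simp, .refl⟩, fun h => h.1.2 (by simp)⟩, .refl, .refl, fun _ => rfl⟩
  | @tail b c _ hbc ih =>
    obtain ⟨u, hu, h1, h2, h3⟩ := ih
    by_cases hc : c ∈ Ignore D A Y L N
    · exact ⟨u, hu, h1, h2.tail ⟨hbc.1, hc⟩, fun h => absurd hc h⟩
    · have hcv : c ∈ H1verts D A Y L N := by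
        refine ⟨?_, hc⟩
        have := hbc.1
        simp only [H0, moral, SimpleGraph.fromRel_adj] at this
        tauto
      refine ⟨c, hcv, ?_, .refl, fun _ => rfl⟩
      by_cases huc : u = c
      · exact huc ▸ h1
      · refine h1.tail ⟨?_, hbc.2⟩
        have h4 : Relation.ReflTransGen
            (fun a b => (H0 D A Y L).Adj a b ∧ (b ∈ Ignore D A Y L N ∨ b = c)) u c :=
          (Relation.ReflTransGen.mono (fun a b h => ⟨h.1, Or.inl h.2⟩) _ _ h2).tail ⟨hbc.1, Or.inr rfl⟩
        obtain ⟨p, hp⟩ := exists_isPath h4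
        simp only [H1, SimpleGraph.fromRel_adj]
        refine ⟨huc, Or.inl ⟨hu, hcv, Or.inl ⟨p, isPath_mono (fun _ _ h => h.1) hp, ?_⟩⟩⟩
        intro x hx hxu hxc
        rcases isPath_mem hp x hx with h | ⟨w, -, h | h⟩
        · exact absurd h hxu
        · exact h
        · exact absurd h hxc

/-- Part 1 of Lemma 5 (statement 2): every `A`–`Y` cut in `H¹` satisfies the
graphical adjustment criterion. -/
theorem stmt2 {V : Type*} [Fintype V] [DecidableEq V]
    (D : V → V → Prop) (hacy : Acyclic D)
    (A Y : V) (L N : Set V)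
    (hAY : A ≠ Y) (hAancY : Relation.ReflTransGen D A Y)
    (hLnd : L ∩ desc D {A} = ∅) (hLY : Y ∉ L)
    (hN : {A, Y} ∪ L ⊆ N)
    (Z : Set V) (hZ : IsCut (H1verts D A Y L N) (H1 D A Y L N) A Y Z) :
    GAC D A Y L N Z := by
  obtain ⟨hZV, hZAY, hcut⟩ := hZ
  have hAZ : A ∉ Z := fun h => by
    have : A ∈ Z ∩ {A, Y} := ⟨h, by simp⟩
    rw [hZAY] at this; exact this
  have hYZ : Y ∉ Z := fun h => by
    have : Y ∈ Z ∩ {A, Y} := ⟨h, by simp⟩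
    rw [hZAY] at this; exact this
  have hforb : ∀ x ∈ forb D A Y, Relation.ReflTransGen D A x := by
    rintro x (⟨v, hv, hvx⟩ | rfl)
    · exact hv.2.1.trans hvx
    · exact .refl
  have hAv : A ∈ H1verts D A Y L N := ⟨⟨A, by simp, .refl⟩, fun h => h.1.2 (by simp)⟩
  have hYv : Y ∈ H1verts D A Y L N := ⟨⟨Y, by simp, .refl⟩, fun h => h.1.2 (by simp)⟩
  have hzI : ∀ z ∈ Z, z ∈ N ∧ z ∉ forb D A Y := by
    intro z hz
    have h1 := hZV hz
    have hzA : z ≠ A := fun h => hAZ (h ▸ hz)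
    have hzY : z ≠ Y := fun h => hYZ (h ▸ hz)
    have h2 : ¬ (z ∈ (Set.univ \ N) ∪ forb D A Y) := fun h =>
      h1.2 ⟨⟨h1.1, by simp [hzA, hzY]⟩, h⟩
    simp only [Set.mem_union, Set.mem_diff, Set.mem_univ, true_and, not_or, not_not] at h2
    exact h2
  refine ⟨?_, ?_, ?_, fun z hz => (hzI z hz).1⟩
  · rintro s rfl t rfl p hp
    by_contra hnb
    simp only [Blocked, not_or, not_exists, not_and] at hnb
    obtain ⟨hb1, hb2⟩ := hnb
    have hanc : ∀ a b, pbd D s t a b → b ∈ ancAYL D s t L → a ∈ ancAYL D s t L := by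
      rintro a b hab ⟨v, hv, hbv⟩
      exact ⟨v, hv, .head hab.1 hbv⟩
    have hanc' : ∀ a b, Relation.ReflTransGen (pbd D s t) a b → b ∈ ancAYL D s t L →
        a ∈ ancAYL D s t L := by
      rintro a b hab hb
      induction hab using Relation.ReflTransGen.head_induction_on with
      | refl => exact hb
      | head h _ ih => exact hanc _ _ h ih
    obtain ⟨h1, h2, h3, h4⟩ := hp
    cases p with
    | nil => simp at h2
    | cons a p =>
      simp only [List.head?_cons, Option.some.injEq] at h2
      subst h2
      have hall := all_mem hanc p a hAv.1 h1 (by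
        intro y hy
        rw [h3] at hy
        cases hy
        exact hYv.1) (by
        intro x y z hi hxy hzy
        have := hb2 x y z hi ⟨hxy, hzy⟩
        push Not at this
        obtain ⟨d, ⟨y', rfl, hd⟩, hdZ⟩ := this
        exact hanc' _ d hd (hZV hdZ).1)
      have hr := moral_reach (Z := Z) (fun a b hab hba => hacy a b hab.1 (.single hba.1)) t hYZ
        p.length p a le_rfl hall h1 h3 h4 (fun x y z hi hc => hb1 x y z hi (fun h1 h2 => hc ⟨h1, h2⟩))
      obtain ⟨u, -, hu, -, hut⟩ := H1_reach D a t L N Z hr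
      rw [hut hYv.2] at hu
      obtain ⟨q, hq⟩ := exists_isPath hu
      obtain ⟨z, hz, hzq⟩ := hcut q (isPath_mono (fun _ _ h => h.1) hq)
      rcases isPath_mem hq z hzq with h | ⟨w, -, h⟩
      · exact hAZ (h ▸ hz)
      · exact h hz
  · ext z
    simp only [Set.mem_inter_iff, Set.mem_empty_iff_false, iff_false]
    exact fun h => (hzI z h.1).2 h.2
  · intro l hl
    have hnd : ¬ Relation.ReflTransGen D A l := fun h => by
      have : l ∈ L ∩ desc D {A} := ⟨hl, A, rfl, h⟩
      rw [hLnd] at this; exact this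
    have hlA : l ≠ A := fun h => hnd (h ▸ .refl)
    have hlY : l ≠ Y := fun h => hLY (h ▸ hl)
    have hlv : l ∈ H1verts D A Y L N := by
      refine ⟨⟨l, by simp [hl], .refl⟩, fun h => ?_⟩
      rcases h.2 with h | h
      · exact h.2 (hN (Or.inr hl))
      · exact hnd (hforb l h)
    have e1 : (H1 D A Y L N).Adj A l := by
      simp only [H1, SimpleGraph.fromRel_adj]
      exact ⟨hlA.symm, Or.inl ⟨hAv, hlv, Or.inr (Or.inl ⟨by trivial, hl⟩)⟩⟩
    have e2 : (H1 D A Y L N).Adj l Y := by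
      simp only [H1, SimpleGraph.fromRel_adj]
      exact ⟨hlY, Or.inr ⟨hYv, hlv, Or.inr (Or.inr ⟨by trivial, hl⟩)⟩⟩
    obtain ⟨z, hz, hzp⟩ := hcut [A, l, Y] ⟨by simp [List.Chain', e1, e2], rfl, rfl,
      by simp [hlA.symm, hlY, hAY]⟩
    simp only [List.mem_cons, List.not_mem_nil, or_false] at hzp
    rcases hzp with rfl | rfl | rfl
    · exact absurd hz hAZ
    · exact hz
    · exact absurd hz hYZ

end CausalGraph
end

section
/- If Z ⊆ an_G({A,Y}∪L), then Z satisfies the graphical adjustment criterion for A,Y,L,N in G if and only if Z is an A–Y cut in H^1. -/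
open Relation Set

namespace CausalGraph

section aux
variable {V : Type*}

theorem aux_mono {r q : V → V → Prop} {a b : V} (h : Relation.ReflTransGen r a b)
    (hi : ∀ x y, r x y → q x y) : Relation.ReflTransGen q a b := by
  induction h with
  | refl => exact .refl
  | tail _ h ih => exact ih.tail (hi _ _ h)

theorem aux_symm {r : V → V → Prop} (hi : ∀ x y, r x y → r y x) {a b : V}
    (h : Relation.ReflTransGen r a b) : Relation.ReflTransGen r b a := by
  induction h with
  | refl => exact .refl
  | tail _ h ih => exact .head (hi _ _ h) ih

theorem aux_path_rtg {Adj : V → V → Prop} {P : V → Prop} :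
    ∀ (p : List V) (u v : V), IsPath Adj u v p → (∀ x ∈ p, P x) →
      Relation.ReflTransGen (fun a b => Adj a b ∧ P a ∧ P b) u v := by
  intro p
  induction p with
  | nil => intro u v h; simp [IsPath] at h
  | cons a p ih =>
    intro u v h hP
    obtain ⟨h1, h2, h3, h4⟩ := h
    simp at h2
    subst h2
    cases p with
    | nil =>
      simp at h3
      subst h3
      exact .refl
    | cons b q =>
      refine Relation.ReflTransGen.head (b := b) ?_ (ih b v ⟨?_, ?_, ?_, ?_⟩ ?_)
      · refine ⟨?_, hP _ (by simp), hP _ (by simp)⟩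
        exact (List.isChain_cons_cons.1 h1).1
      · exact (List.isChain_cons_cons.1 h1).2
      · simp
      · simpa using h3
      · exact (List.nodup_cons.1 h4).2
      · intro x hx; exact hP x (List.mem_cons_of_mem _ hx)

theorem aux_rtg_path {Adj : V → V → Prop} {P : V → Prop} {u v : V}
    (h : Relation.ReflTransGen (fun a b => Adj a b ∧ P a ∧ P b) u v) (hv : P v) :
    ∃ p, IsPath Adj u v p ∧ ∀ x ∈ p, P x := by
  induction h using Relation.ReflTransGen.head_induction_on with
  | refl => exact ⟨[v], ⟨List.isChain_singleton _, by simp, by simp, by simp⟩, by simpa using hv⟩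
  | @head a b hab hbv ih =>
    obtain ⟨p, ⟨h1, h2, h3, h4⟩, hP⟩ := ih
    by_cases ha : a ∈ p
    · obtain ⟨s, t, rfl⟩ := List.append_of_mem ha
      refine ⟨a :: t, ⟨?_, by simp, ?_, ?_⟩, ?_⟩
      · exact h1.right_of_append
      · simpa using h3
      · exact (List.nodup_append.1 h4).2.1
      · intro x hx; exact hP x (List.mem_append_right _ hx)
    · refine ⟨a :: p, ⟨?_, by simp, ?_, ?_⟩, ?_⟩
      · cases p with
        | nil => simp at h2
        | cons c q =>
          simp at h2
          subst h2
          exact List.isChain_cons_cons.2 ⟨hab.1, h1⟩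
      · cases p with
        | nil => simp at h2
        | cons c q => simpa using h3
      · exact List.nodup_cons.2 ⟨ha, h4⟩
      · intro x hx
        rcases List.mem_cons.1 hx with rfl | hx
        · exact hab.2.1
        · exact hP x hx

/-- status of an interior vertex -/
def Ok (D : V → V → Prop) (Z : Set V) (x y z : V) : Prop :=
  (D x y → D z y → ∃ d ∈ Z, Relation.ReflTransGen D y d) ∧
  (¬ (D x y ∧ D z y) → y ∉ Z)

/-- open walk as a function -/
def OW (D : V → V → Prop) (Z : Set V) (A Y : V) (n : ℕ) (w : ℕ → V) : Prop :=
  w 0 = A ∧ w n = Y ∧ (∀ i < n, D (w i) (w (i+1)) ∨ D (w (i+1)) (w i)) ∧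
  (∀ i, i + 1 < n → Ok D Z (w i) (w (i+1)) (w (i+2)))

theorem aux_follow {D : V → V → Prop} (hD : Acyclic D) {Z : Set V} {A Y : V} {n : ℕ} {w : ℕ → V}
    (h : OW D Z A Y n w) (j : ℕ) (hj : j + 1 ≤ n) (hb : D (w (j+1)) (w j)) :
    ∀ k a, a + k = j → D (w a) (w (a+1)) → ∃ d ∈ Z, Relation.ReflTransGen D (w a) d := by
  intro k
  induction k with
  | zero =>
    intro a ha hf
    have : a = j := by omega
    subst this
    exact absurd (.single hb) (hD _ _ hf)
  | succ k ih =>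
    intro a ha hf
    obtain ⟨_, _, he, ho⟩ := h
    have key : ∃ d ∈ Z, Relation.ReflTransGen D (w (a+1)) d := by
      rcases he (a+1) (by omega) with h1 | h1
      · exact ih (a+1) (by omega) h1
      · exact (ho a (by omega)).1 hf h1
    obtain ⟨d, hd, hr⟩ := key
    exact ⟨d, hd, .head hf hr⟩

theorem aux_short {D : V → V → Prop} (hD : Acyclic D) {Z : Set V} {A Y : V} {n : ℕ} {w : ℕ → V}
    (h : OW D Z A Y n w) (i m : ℕ) (hm : 0 < m) (hj : i + m ≤ n) (hij : w i = w (i + m)) :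
    OW D Z A Y (n - m) (fun k => if k ≤ i then w k else w (k + m)) := by
  have h' := h
  obtain ⟨h0, hn, he, ho⟩ := h
  refine ⟨by simpa using h0, ?_, ?_, ?_⟩
  · by_cases hc : n - m ≤ i
    · have : n - m = i := by omega
      simp only [this, le_refl, if_true]
      rw [hij, ← hn]; congr 1; omega
    · simp only [hc, if_false]
      rw [← hn]; congr 1; omega
  · intro k hk
    rcases lt_trichotomy k i with hki | hki | hki
    · have e1 : k ≤ i := by omega
      have e2 : k + 1 ≤ i := by omega
      simp only [e1, e2, if_true]
      exact he k (by omega)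
    · subst hki
      have e2 : ¬ (k + 1 ≤ k) := by omega
      simp only [le_refl, e2, if_true, if_false]
      rw [hij]
      have := he (k + m) (by omega)
      rwa [show k + m + 1 = k + 1 + m by omega] at this
    · have e1 : ¬ k ≤ i := by omega
      have e2 : ¬ k + 1 ≤ i := by omega
      simp only [e1, e2, if_false]
      have := he (k + m) (by omega)
      rwa [show k + m + 1 = k + 1 + m by omega] at this
  · intro k hk
    rcases lt_trichotomy (k+1) i with hki | hki | hki
    · have e1 : k ≤ i := by omega
      have e2 : k + 1 ≤ i := by omega
      have e3 : k + 2 ≤ i := by omega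
      simp only [e1, e2, e3, if_true]
      exact ho k (by omega)
    · subst hki
      have e1 : k ≤ k + 1 := by omega
      have e3 : ¬ k + 2 ≤ k + 1 := by omega
      simp only [e1, le_refl, e3, if_true, if_false]
      have o1 := ho k (by omega)
      have o2 := ho (k + m) (by omega)
      rw [show k + m + 1 = k + 1 + m by omega, show k + m + 2 = k + 2 + m by omega, ← hij] at o2
      have f1 := he (k+1) (by omega)
      have f2 := he (k+m) (by omega)
      rw [show k + m + 1 = k + 1 + m by omega, ← hij] at f2
      refine ⟨?_, ?_⟩
      · intro a b
        rcases f1 with f1 | f1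
        · rcases f2 with f2 | f2
          · exact o2.1 f2 b
          · refine aux_follow hD h' (k + m) (by omega) ?_ (m-1) (k+1) (by omega) f1
            rw [show k + m + 1 = k + 1 + m by omega, ← hij]
            exact f2
        · exact o1.1 a f1
      · intro hnc
        by_cases a : D (w k) (w (k+1))
        · exact o2.2 (fun c => hnc ⟨a, c.2⟩)
        · exact o1.2 (fun c => a c.1)
    · by_cases hki2 : k = i
      · subst hki2
        have e2 : ¬ (k + 1 ≤ k) := by omega
        have e3 : ¬ (k + 2 ≤ k) := by omega
        simp only [le_refl, e2, e3, if_true, if_false]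
        rw [hij]
        have := ho (k + m) (by omega)
        rwa [show k + m + 1 = k + 1 + m by omega, show k + m + 2 = k + 2 + m by omega] at this
      · have e1 : ¬ k ≤ i := by omega
        have e2 : ¬ (k + 1 ≤ i) := by omega
        have e3 : ¬ (k + 2 ≤ i) := by omega
        simp only [e1, e2, e3, if_false]
        have := ho (k + m) (by omega)
        rwa [show k + m + 1 = k + 1 + m by omega, show k + m + 2 = k + 2 + m by omega] at this

theorem aux_ow_path {D : V → V → Prop} (hD : Acyclic D) {Z : Set V} {A Y : V}
    (h : ∃ n w, OW D Z A Y n w) :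
    ∃ p, IsPath (fun a b => D a b ∨ D b a) A Y p ∧ ¬ Blocked D Z p := by
  classical
  obtain ⟨w, hw⟩ := Nat.find_spec h
  set n := Nat.find h with hn
  have hinj : ∀ i j, i < j → j ≤ n → w i ≠ w j := by
    intro i j hij hj heq
    have := aux_short hD hw i (j - i) (by omega) (by omega)
      (by rw [heq]; congr 1; omega)
    exact Nat.find_min h (m := n - (j - i)) (by omega) ⟨_, this⟩
  obtain ⟨h0, h1, he, ho⟩ := hw
  have hint : ∀ x y z, InteriorAt ((List.range (n+1)).map w) x y z →
      ∃ i, i + 1 < n ∧ x = w i ∧ y = w (i+1) ∧ z = w (i+2) := by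
    rintro x y z ⟨s, t, hst⟩
    have hl := congrArg List.length hst
    simp at hl
    have g : ∀ k : ℕ, ((List.range (n+1)).map w)[k]? = (s ++ x :: y :: z :: t)[k]? := by
      intro k; rw [hst]
    refine ⟨s.length, by omega, ?_, ?_, ?_⟩
    · have := g s.length
      rw [List.getElem?_append_right (by omega)] at this
      simp at this
      rw [List.getElem?_range (by omega)] at this
      simp at this
      exact this.symm
    · have := g (s.length + 1)
      rw [List.getElem?_append_right (by omega)] at this
      simp at this
      rw [List.getElem?_range (by omega)] at this
      simp at this
      exact this.symm
    · have := g (s.length + 2)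
      rw [List.getElem?_append_right (by omega)] at this
      simp at this
      rw [List.getElem?_range (by omega)] at this
      simp at this
      exact this.symm
  refine ⟨(List.range (n+1)).map w, ⟨?_, ?_, ?_, ?_⟩, ?_⟩
  · show List.IsChain _ _
    rw [List.isChain_iff_getElem]
    intro i hi
    simp at hi
    simpa using he i (by omega)
  · simp [List.head?_range, h0]
  · simp [List.getLast?_range, h1]
  · refine List.Nodup.map_on ?_ List.nodup_range
    intro a ha b hb hab
    simp at ha hb
    rcases lt_trichotomy a b with h | h | h
    · exact absurd hab (hinj a b h (by omega))
    · exact h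
    · exact absurd hab.symm (hinj b a h (by omega))
  · rintro (⟨x, y, z, hi, hc, hy⟩ | ⟨x, y, z, hi, hc, hy⟩)
    · obtain ⟨i, hi', rfl, rfl, rfl⟩ := hint x y z hi
      exact (ho i hi').2 hc hy
    · obtain ⟨i, hi', rfl, rfl, rfl⟩ := hint x y z hi
      obtain ⟨d, hd, hr⟩ := (ho i hi').1 hc.1 hc.2
      exact hy d ⟨_, rfl, hr⟩ hd

theorem aux_path_ow {D : V → V → Prop} {Z : Set V} {A Y : V} {p : List V}
    (hp : IsPath (fun a b => D a b ∨ D b a) A Y p) (hb : ¬ Blocked D Z p) :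
    ∃ n w, OW D Z A Y n w := by
  obtain ⟨h1, h2, h3, h4⟩ := hp
  have hne : p ≠ [] := by rintro rfl; simp at h2
  have hlen : 0 < p.length := List.length_pos_of_ne_nil hne
  have hget : ∀ i (h : i < p.length), p.getD i A = p[i] := by
    intro i h; simp [h]
  refine ⟨p.length - 1, fun i => p.getD i A, ?_, ?_, ?_, ?_⟩
  · cases p with
    | nil => simp at hne
    | cons a q => simpa using h2
  · show p.getD (p.length - 1) A = Y
    rw [List.getLast?_eq_getElem?] at h3
    rw [List.getD_eq_getElem?_getD, h3]; rfl
  · intro i hi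
    show D (p.getD i A) (p.getD (i+1) A) ∨ D (p.getD (i+1) A) (p.getD i A)
    rw [hget i (by omega), hget (i+1) (by omega)]
    have := List.isChain_iff_getElem.1 h1 i (by omega)
    exact this
  · intro i hi
    show Ok D Z (p.getD i A) (p.getD (i+1) A) (p.getD (i+2) A)
    rw [hget i (by omega), hget (i+1) (by omega), hget (i+2) (by omega)]
    have hI : InteriorAt p p[i] p[i+1] p[i+2] := by
      refine ⟨p.take i, p.drop (i+3), ?_⟩
      rw [← List.drop_eq_getElem_cons, ← List.drop_eq_getElem_cons, ← List.drop_eq_getElem_cons,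
        List.take_append_drop]
    refine ⟨?_, ?_⟩
    · intro a b
      by_contra hcon
      refine hb (Or.inr ⟨_, _, _, hI, ⟨a, b⟩, ?_⟩)
      rintro d ⟨y, rfl, hr⟩ hd
      exact hcon ⟨d, hd, hr⟩
    · intro hnc hy
      exact hb (Or.inl ⟨_, _, _, hI, hnc, hy⟩)

inductive Reach (D : V → V → Prop) (Z : Set V) (A : V) : V → Bool → Prop
  | start : Reach D Z A A false
  | fwd {v u d} : Reach D Z A v d → v ∉ Z → D v u → Reach D Z A u true
  | bwdn {v u} : Reach D Z A v false → v ∉ Z → D u v → Reach D Z A u false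
  | bwdc {v u} : Reach D Z A v true → (∃ d ∈ Z, Relation.ReflTransGen D v d) → D u v →
      Reach D Z A u false

theorem aux_ext {D : V → V → Prop} {Z : Set V} {A v u : V} {n : ℕ} {w : ℕ → V}
    (h : OW D Z A v n w) (hvu : D v u ∨ D u v) (hok : 0 < n → Ok D Z (w (n-1)) v u) :
    ∃ w', OW D Z A u (n+1) w' ∧ w' n = v := by
  obtain ⟨h0, h1, he, ho⟩ := h
  refine ⟨fun k => if k ≤ n then w k else u, ⟨by simpa using h0, by simp, ?_, ?_⟩, by simpa using h1⟩
  · intro i hi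
    by_cases hin : i = n
    · subst hin; simpa [h1] using hvu
    · have e1 : i ≤ n := by omega
      have e2 : i + 1 ≤ n := by omega
      simp only [e1, e2, if_true]
      exact he i (by omega)
  · intro i hi
    by_cases hin : i + 1 = n
    · have e1 : i ≤ n := by omega
      have e2 : i + 1 ≤ n := by omega
      have e3 : ¬ i + 2 ≤ n := by omega
      simp only [e1, e2, e3, if_true, if_false]
      have := hok (by omega)
      rwa [show n - 1 = i by omega, ← h1, ← hin] at this
    · have e1 : i ≤ n := by omega
      have e2 : i + 1 ≤ n := by omega
      have e3 : i + 2 ≤ n := by omega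
      simp only [e1, e2, e3, if_true]
      exact ho i (by omega)

theorem aux_reach_ow {D : V → V → Prop} (hD : Acyclic D) {Z : Set V} {A v : V} {d : Bool}
    (h : Reach D Z A v d) :
    ∃ n w, OW D Z A v n w ∧ (d = false → 0 < n → D v (w (n-1))) ∧
      (d = true → D (w (n-1)) v) := by
  have asym : ∀ {a b}, D a b → ¬ D b a := fun h h' => hD _ _ h (.single h')
  induction h with
  | start => exact ⟨0, fun _ => A, ⟨rfl, rfl, by simp, by simp⟩, by simp, by simp⟩
  | @fwd v u d _ hv hvu ih =>
    obtain ⟨n, w, hw, _, _⟩ := ih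
    obtain ⟨w', hw', hn⟩ := aux_ext hw (Or.inl hvu)
      (fun _ => ⟨fun _ h => absurd h (asym hvu), fun _ => hv⟩)
    exact ⟨n+1, w', hw', by simp, fun _ => by simpa [hn] using hvu⟩
  | @bwdn v u _ hv huv ih =>
    obtain ⟨n, w, hw, hf, _⟩ := ih
    obtain ⟨w', hw', hn⟩ := aux_ext hw (Or.inr huv)
      (fun hp => ⟨fun h _ => absurd h (asym (hf rfl hp)), fun _ => hv⟩)
    exact ⟨n+1, w', hw', fun _ _ => by simpa [hn] using huv, by simp⟩
  | @bwdc v u _ hv huv ih =>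
    obtain ⟨n, w, hw, _, hf⟩ := ih
    obtain ⟨w', hw', hn⟩ := aux_ext hw (Or.inr huv)
      (fun hp => ⟨fun _ _ => hv, fun hc => absurd ⟨hf rfl, huv⟩ hc⟩)
    exact ⟨n+1, w', hw', fun _ _ => by simpa [hn] using huv, by simp⟩

theorem aux_down {D : V → V → Prop} {Z : Set V} {A v y : V} {d : Bool}
    (h : Reach D Z A v d) (hr : Relation.ReflTransGen D v y)
    (hz : ¬ ∃ d ∈ Z, Relation.ReflTransGen D v d) : ∃ d, Reach D Z A y d := by
  induction hr with
  | refl => exact ⟨d, h⟩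
  | @tail b c hb hc ih =>
    obtain ⟨d', h'⟩ := ih
    exact ⟨true, .fwd h' (fun hh => hz ⟨b, hh, hb⟩) hc⟩

theorem aux_up {D : V → V → Prop} {Z : Set V} {A v : V}
    (hr : Relation.ReflTransGen D v A)
    (hz : ¬ ∃ d ∈ Z, Relation.ReflTransGen D v d) : Reach D Z A v false := by
  induction hr using Relation.ReflTransGen.head_induction_on with
  | refl => exact .start
  | @head a b hab hb ih =>
    refine .bwdn (ih ?_) ?_ hab
    · rintro ⟨d, hd, h⟩; exact hz ⟨d, hd, .head hab h⟩
    · intro h; exact hz ⟨b, h, .single hab⟩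

/-- moving back from a vertex v in the ancestral set -/
theorem aux_back {D : V → V → Prop} {Z : Set V} {A Y v u : V} {d : Bool}
    (hv : v ∈ anc D ({A, Y} ∪ Z)) (h : Reach D Z A v d) (hd : d = true ∨ v ∉ Z) (huv : D u v) :
    (∃ d, Reach D Z A Y d) ∨ ∃ d, Reach D Z A u d := by
  cases d with
  | false => exact Or.inr ⟨_, .bwdn h (by simpa using hd) huv⟩
  | true =>
    by_cases hz : ∃ d ∈ Z, Relation.ReflTransGen D v d
    · exact Or.inr ⟨_, .bwdc h hz huv⟩
    · obtain ⟨y, hy, hr⟩ := hv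
      rcases hy with (rfl | rfl) | hy
      · exact Or.inr ⟨_, .bwdn (aux_up hr hz) (fun hh => hz ⟨v, hh, .refl⟩) huv⟩
      · exact Or.inl (aux_down h hr hz)
      · exact absurd ⟨y, hy, hr⟩ hz

theorem aux_moral_reach {D : V → V → Prop} {Z : Set V} {A Y : V} {v : V}
    (h : Relation.ReflTransGen
      (fun a b => (moral D (anc D ({A, Y} ∪ Z))).Adj a b ∧ a ∉ Z ∧ b ∉ Z) A v) :
    (∃ d, Reach D Z A Y d) ∨ ∃ d, Reach D Z A v d := by
  induction h with
  | refl => exact Or.inr ⟨_, .start⟩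
  | @tail b c hb hbc ih =>
    rcases ih with ih | ⟨d, ih⟩
    · exact Or.inl ih
    · obtain ⟨hadj, hbZ, hcZ⟩ := hbc
      rw [moral, SimpleGraph.fromRel_adj] at hadj
      have : b ∈ anc D ({A, Y} ∪ Z) ∧ (D b c ∨ D c b ∨
          ∃ w ∈ anc D ({A, Y} ∪ Z), D b w ∧ D c w) := by
        rcases hadj.2 with ⟨h1, h2, h3⟩ | ⟨h1, h2, h3⟩
        · exact ⟨h1, h3⟩
        · refine ⟨h2, ?_⟩
          rcases h3 with h | h | ⟨w, hw, h, h'⟩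
          · exact Or.inr (Or.inl h)
          · exact Or.inl h
          · exact Or.inr (Or.inr ⟨w, hw, h', h⟩)
      obtain ⟨hbA, h | h | ⟨w, hw, h, h'⟩⟩ := this
      · exact Or.inr ⟨_, .fwd ih hbZ h⟩
      · exact aux_back hbA ih (Or.inr hbZ) h
      · exact aux_back hw (.fwd ih hbZ h) (Or.inl rfl) h'

theorem aux_anc1 {D : V → V → Prop} {Z : Set V} {A Y : V} {n : ℕ} {w : ℕ → V}
    (h : OW D Z A Y n w) : ∀ k i, i + 1 + k = n → D (w i) (w (i+1)) →
      w i ∈ anc D ({A, Y} ∪ Z) := by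
  obtain ⟨h0, h1, he, ho⟩ := h
  intro k
  induction k with
  | zero =>
    intro i hi hf
    refine ⟨Y, by simp, ?_⟩
    rw [← h1, ← hi]; exact .single hf
  | succ k ih =>
    intro i hi hf
    rcases he (i+1) (by omega) with h | h
    · obtain ⟨y, hy, hr⟩ := ih (i+1) (by omega) h
      exact ⟨y, hy, .head hf hr⟩
    · obtain ⟨d, hd, hr⟩ := (ho i (by omega)).1 hf h
      exact ⟨d, Or.inr hd, .head hf hr⟩

theorem aux_anc2 {D : V → V → Prop} {Z : Set V} {A Y : V} {n : ℕ} {w : ℕ → V}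
    (h : OW D Z A Y n w) : ∀ i, i + 1 ≤ n → D (w (i+1)) (w i) →
      w (i+1) ∈ anc D ({A, Y} ∪ Z) := by
  obtain ⟨h0, h1, he, ho⟩ := h
  intro i
  induction i with
  | zero =>
    intro hi hf
    refine ⟨A, by simp, ?_⟩
    rw [← h0]; exact .single hf
  | succ i ih =>
    intro hi hf
    rcases he i (by omega) with h | h
    · obtain ⟨d, hd, hr⟩ := (ho i (by omega)).1 h hf
      exact ⟨d, Or.inr hd, .head hf hr⟩
    · obtain ⟨y, hy, hr⟩ := ih (by omega) h
      exact ⟨y, hy, .head hf hr⟩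

theorem aux_anc {D : V → V → Prop} {Z : Set V} {A Y : V} {n : ℕ} {w : ℕ → V}
    (h : OW D Z A Y n w) (i : ℕ) (hi : i ≤ n) : w i ∈ anc D ({A, Y} ∪ Z) := by
  by_cases hin : i = n
  · subst hin; exact ⟨Y, by simp, by rw [h.2.1]⟩
  rcases h.2.2.1 i (by omega) with hf | hf
  · exact aux_anc1 h (n - (i+1)) i (by omega) hf
  · cases i with
    | zero => exact ⟨A, by simp, by rw [h.1]⟩
    | succ i =>
      rcases h.2.2.1 i (by omega) with hg | hg
      · obtain ⟨d, hd, hr⟩ := (h.2.2.2 i (by omega)).1 hg hf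
        exact ⟨d, Or.inr hd, hr⟩
      · exact aux_anc2 h i (by omega) hg

theorem aux_ow_moral {D : V → V → Prop} (hD : Acyclic D) {Z : Set V} {A Y : V} {n : ℕ} {w : ℕ → V}
    (hA : A ∉ Z) (hY : Y ∉ Z) (h : OW D Z A Y n w) :
    Relation.ReflTransGen
      (fun a b => (moral D (anc D ({A, Y} ∪ Z))).Adj a b ∧ a ∉ Z ∧ b ∉ Z) A Y := by
  have hanc := aux_anc h
  obtain ⟨h0, h1, he, ho⟩ := h
  have asym : ∀ {a b}, D a b → ¬ D b a := fun h h' => hD _ _ h (.single h')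
  have hnZ : ∀ i ≤ n, (0 < i → i < n → ¬ (D (w (i-1)) (w i) ∧ D (w (i+1)) (w i))) → w i ∉ Z := by
    intro i hi hc
    by_cases hi0 : i = 0
    · subst hi0; rwa [h0]
    by_cases hin : i = n
    · subst hin; rwa [h1]
    obtain ⟨k, rfl⟩ := Nat.exists_eq_succ_of_ne_zero hi0
    exact (ho k (by omega)).2 (hc (by omega) (by omega))
  have main : ∀ i ≤ n, (0 < i → i < n → ¬ (D (w (i-1)) (w i) ∧ D (w (i+1)) (w i))) →
    Relation.ReflTransGen
      (fun a b => (moral D (anc D ({A, Y} ∪ Z))).Adj a b ∧ a ∉ Z ∧ b ∉ Z) A (w i) := by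
    intro i
    induction i using Nat.strong_induction_on with
    | _ i ih =>
      intro hi hc
      rcases i with _ | k
      · rw [h0]
      by_cases hk : 0 < k ∧ D (w (k-1)) (w k) ∧ D (w (k+1)) (w k)
      · obtain ⟨hk0, hk1, hk2⟩ := hk
        obtain ⟨j, rfl⟩ := Nat.exists_eq_succ_of_ne_zero hk0.ne'
        simp only [Nat.succ_eq_add_one, Nat.add_sub_cancel] at *
        have hj : 0 < j → j < n → ¬ (D (w (j-1)) (w j) ∧ D (w (j+1)) (w j)) :=
          fun _ _ hh => asym hk1 hh.2
        have r := ih j (by omega) (by omega) hj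
        by_cases heq : w j = w (j+1+1)
        · rw [← heq]; exact r
        · refine r.tail ⟨?_, hnZ j (by omega) hj, hnZ _ hi hc⟩
          rw [moral, SimpleGraph.fromRel_adj]
          exact ⟨heq, Or.inl ⟨hanc _ (by omega), hanc _ (by omega),
            Or.inr (Or.inr ⟨w (j+1), hanc _ (by omega), hk1, hk2⟩)⟩⟩
      · have hj : 0 < k → k < n → ¬ (D (w (k-1)) (w k) ∧ D (w (k+1)) (w k)) :=
          fun a _ hh => hk ⟨a, hh⟩
        refine (ih k (by omega) (by omega) hj).tail ⟨?_, hnZ k (by omega) hj, hnZ _ hi hc⟩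
        have hek := he k (by omega)
        rw [moral, SimpleGraph.fromRel_adj]
        refine ⟨?_, Or.inl ⟨hanc _ (by omega), hanc _ (by omega), ?_⟩⟩
        · intro heq
          rw [← heq] at hek
          rcases hek with h | h <;> exact asym h h
        · rcases hek with h | h
          · exact Or.inl h
          · exact Or.inr (Or.inl h)
  have := main n le_rfl (fun _ h => absurd h (lt_irrefl _))
  rwa [h1] at this

theorem aux_dsep {D : V → V → Prop} (hD : Acyclic D) {Z : Set V} {A Y : V}
    (hA : A ∉ Z) (hY : Y ∉ Z) :
    DSep D {A} {Y} Z ↔ ¬ Relation.ReflTransGen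
      (fun a b => (moral D (anc D ({A, Y} ∪ Z))).Adj a b ∧ a ∉ Z ∧ b ∉ Z) A Y := by
  constructor
  · intro h hr
    have : ∃ d, Reach D Z A Y d := by
      rcases aux_moral_reach hr with h | h <;> exact h
    obtain ⟨d, hd⟩ := this
    obtain ⟨n, w, hw, _⟩ := aux_reach_ow hD hd
    obtain ⟨p, hp, hb⟩ := aux_ow_path hD ⟨n, w, hw⟩
    exact hb (h A rfl Y rfl p hp)
  · rintro h s rfl t rfl p hp
    by_contra hb
    obtain ⟨n, w, hw⟩ := aux_path_ow hp hb
    exact h (aux_ow_moral hD hA hY hw)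

theorem aux_pbd_anc {D : V → V → Prop} {A Y : V} {v y : V}
    (h : Relation.ReflTransGen D v y) :
    Relation.ReflTransGen (pbd D A Y) v y ∨ Relation.ReflTransGen (pbd D A Y) v A := by
  induction h using Relation.ReflTransGen.head_induction_on with
  | refl => exact Or.inl .refl
  | @head a b hab hb ih =>
    by_cases ha : a = A
    · subst ha; exact Or.inr .refl
    · have : pbd D A Y a b := ⟨hab, fun h => ha h.1⟩
      rcases ih with ih | ih
      · exact Or.inl (.head this ih)
      · exact Or.inr (.head this ih)

theorem aux_anc_eq {D : V → V → Prop} {A Y : V} {L Z : Set V} (hLZ : L ⊆ Z)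
    (hZ : Z ⊆ ancAYL D A Y L) :
    anc (pbd D A Y) ({A, Y} ∪ Z) = ancAYL D A Y L := by
  ext v
  constructor
  · rintro ⟨y, hy, hr⟩
    have hr' : Relation.ReflTransGen D v y := aux_mono hr (fun _ _ h => h.1)
    rcases hy with hy | hy
    · exact ⟨y, Or.inl hy, hr'⟩
    · obtain ⟨x, hx, hr2⟩ := hZ hy
      exact ⟨x, hx, hr'.trans hr2⟩
  · rintro ⟨y, hy, hr⟩
    rcases aux_pbd_anc (A := A) (Y := Y) hr with h | h
    · exact ⟨y, hy.imp id (fun h => hLZ h), h⟩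
    · exact ⟨A, by simp, h⟩

end aux

/-- Part 2 of Lemma 5 (statement 3): for `Z ⊆ an_G({A,Y} ∪ L)`, `Z` satisfies the
graphical adjustment criterion iff `Z` is an `A`–`Y` cut in `H¹`. -/
theorem stmt3 {V : Type*} [Fintype V] [DecidableEq V]
    (D : V → V → Prop) (hacy : Acyclic D)
    (A Y : V) (L N : Set V)
    (hAY : A ≠ Y) (hAancY : Relation.ReflTransGen D A Y)
    (hLnd : L ∩ desc D {A} = ∅) (hLY : Y ∉ L)
    (hN : {A, Y} ∪ L ⊆ N)
    (Z : Set V) (hZanc : Z ⊆ ancAYL D A Y L) :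
    GAC D A Y L N Z ↔ IsCut (H1verts D A Y L N) (H1 D A Y L N) A Y Z := by
  have hacy' : Acyclic (pbd D A Y) := fun u v h h' =>
    hacy u v h.1 (aux_mono h' (fun _ _ h => h.1))
  have hAf : A ∈ forb D A Y := Or.inr rfl
  have hYf : Y ∈ forb D A Y := Or.inl ⟨Y, ⟨hAY.symm, hAancY, .refl⟩, .refl⟩
  have hforb : ∀ v ∈ forb D A Y, Relation.ReflTransGen D A v := by
    rintro v (⟨c, hc, hr⟩ | rfl)
    · exact hc.2.1.trans hr
    · exact .refl
  have hLf : ∀ l ∈ L, l ∉ forb D A Y := fun l hl hf => by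
    have : l ∈ L ∩ desc D {A} := ⟨hl, A, rfl, hforb l hf⟩
    rw [hLnd] at this; exact this
  have hA1 : A ∈ H1verts D A Y L N := ⟨⟨A, by simp, .refl⟩, fun h => h.1.2 (by simp)⟩
  have hY1 : Y ∈ H1verts D A Y L N := ⟨⟨Y, by simp, .refl⟩, fun h => h.1.2 (by simp)⟩
  have hL1 : ∀ l ∈ L, l ∈ H1verts D A Y L N := fun l hl =>
    ⟨⟨l, Or.inr hl, .refl⟩, fun h => h.2.elim (fun h => h.2 (hN (Or.inr hl))) (hLf l hl)⟩
  constructor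
  · rintro ⟨hsep, hZf, hLZ, hZN⟩
    have hZf' : ∀ z ∈ Z, z ∉ forb D A Y := fun z hz hf => by
      have : z ∈ Z ∩ forb D A Y := ⟨hz, hf⟩
      rw [hZf] at this; exact this
    have hAZ : A ∉ Z := fun h => hZf' A h hAf
    have hYZ : Y ∉ Z := fun h => hZf' Y h hYf
    have hZI : ∀ z ∈ Ignore D A Y L N, z ∉ Z := fun z hz hzZ =>
      hz.2.elim (fun h => h.2 (hZN hzZ)) (hZf' z hzZ)
    refine ⟨fun z hz => ⟨hZanc hz, fun h => hZI z h hz⟩, ?_, ?_⟩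
    · ext z
      simp only [Set.mem_inter_iff, Set.mem_insert_iff, Set.mem_singleton_iff,
        Set.mem_empty_iff_false, iff_false]
      rintro ⟨hz, rfl | rfl⟩
      · exact hAZ hz
      · exact hYZ hz
    · intro p hp
      by_contra hcon
      push Not at hcon
      have hr := aux_path_rtg (P := fun x => x ∉ Z) p A Y hp (fun x hx hz => hcon x hz hx)
      rw [aux_dsep hacy' hAZ hYZ, aux_anc_eq hLZ hZanc] at hsep
      apply hsep
      have hsym : ∀ a b, ((H0 D A Y L).Adj a b ∧ a ∉ Z ∧ b ∉ Z) → ((H0 D A Y L).Adj b a ∧ b ∉ Z ∧ a ∉ Z) :=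
        fun a b h => ⟨h.1.symm, h.2.2, h.2.1⟩
      have key : ∀ u v, u ∉ Z → v ∉ Z → (u ∈ H1verts D A Y L N ∧ v ∈ H1verts D A Y L N ∧
          ((∃ p : List V, IsPath (H0 D A Y L).Adj u v p ∧
          ∀ x ∈ p, x ≠ u → x ≠ v → x ∈ Ignore D A Y L N) ∨
        (u = A ∧ v ∈ L) ∨ (u = Y ∧ v ∈ L))) →
          Relation.ReflTransGen (fun a b => (H0 D A Y L).Adj a b ∧ a ∉ Z ∧ b ∉ Z) u v := by
        rintro u v hu hv ⟨_, _, ⟨q, hq, hI⟩ | h | h⟩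
        · refine aux_path_rtg (P := fun x => x ∉ Z) q u v hq ?_
          intro x hx
          by_cases h1 : x = u
          · rwa [h1]
          by_cases h2 : x = v
          · rwa [h2]
          exact hZI x (hI x hx h1 h2)
        · exact absurd (hLZ h.2) hv
        · exact absurd (hLZ h.2) hv
      clear hsep
      change Relation.ReflTransGen (fun a b => (H0 D A Y L).Adj a b ∧ a ∉ Z ∧ b ∉ Z) A Y
      have gen : ∀ y, Relation.ReflTransGen
          (fun a b => (H1 D A Y L N).Adj a b ∧ a ∉ Z ∧ b ∉ Z) A y →
          Relation.ReflTransGen (fun a b => (H0 D A Y L).Adj a b ∧ a ∉ Z ∧ b ∉ Z) A y := ?_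
      · exact gen Y hr
      clear hr
      intro y hr
      induction hr with
      | refl => exact .refl
      | @tail b c _ hbc ih =>
        refine Relation.ReflTransGen.trans ih ?_
        obtain ⟨hadj, hb, hc⟩ := hbc
        rw [H1, SimpleGraph.fromRel_adj] at hadj
        rcases hadj.2 with h | h
        · exact key b c hb hc h
        · exact aux_symm hsym (key c b hc hb h)
  · rintro ⟨hZ1, hZAY, hcut⟩
    have hAZ : A ∉ Z := fun h => by
      have : A ∈ Z ∩ {A, Y} := ⟨h, by simp⟩
      rw [hZAY] at this; exact this
    have hYZ : Y ∉ Z := fun h => by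
      have : Y ∈ Z ∩ {A, Y} := ⟨h, by simp⟩
      rw [hZAY] at this; exact this
    have hLZ : L ⊆ Z := by
      intro l hl
      have hlA : A ≠ l := by rintro rfl; exact hLf _ hl hAf
      have hlY : l ≠ Y := by rintro rfl; exact hLY hl
      obtain ⟨z, hz, hzp⟩ := hcut [A, l, Y] ⟨by
        show List.IsChain _ _
        simp only [List.isChain_cons_cons, List.isChain_singleton, and_true]
        constructor
        · rw [H1, SimpleGraph.fromRel_adj]
          exact ⟨hlA, Or.inl ⟨hA1, hL1 l hl, Or.inr (Or.inl ⟨rfl, hl⟩)⟩⟩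
        · rw [H1, SimpleGraph.fromRel_adj]
          exact ⟨hlY, Or.inr ⟨hY1, hL1 l hl, Or.inr (Or.inr ⟨rfl, hl⟩)⟩⟩,
        by simp, by simp, by simp [hlA, hlY, hAY]⟩
      simp only [List.mem_cons, List.not_mem_nil, or_false] at hzp
      rcases hzp with rfl | rfl | rfl
      · exact absurd hz hAZ
      · exact hz
      · exact absurd hz hYZ
    have hZI : ∀ z ∈ Z, ¬ (z ∉ N ∨ z ∈ forb D A Y) := by
      intro z hz h
      refine (hZ1 hz).2 ⟨⟨hZanc hz, ?_⟩, h.imp (fun h => ⟨trivial, h⟩) id⟩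
      rintro (rfl | rfl)
      · exact hAZ hz
      · exact hYZ hz
    refine ⟨?_, ?_, hLZ, fun z hz => by_contra fun h => hZI z hz (Or.inl h)⟩
    · rw [aux_dsep hacy' hAZ hYZ, aux_anc_eq hLZ hZanc]
      intro hr
      have inv : ∀ v, Relation.ReflTransGen
          (fun a b => (H0 D A Y L).Adj a b ∧ a ∉ Z ∧ b ∉ Z) A v →
          ∃ u, u ∈ H1verts D A Y L N ∧ u ∉ Z ∧
            Relation.ReflTransGen (fun a b => (H1 D A Y L N).Adj a b ∧ a ∉ Z ∧ b ∉ Z) A u ∧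
            (v = u ∨ v ∈ Ignore D A Y L N) ∧
            Relation.ReflTransGen (fun a b => (H0 D A Y L).Adj a b ∧
              (a = u ∨ a ∈ Ignore D A Y L N) ∧ (b = u ∨ b ∈ Ignore D A Y L N)) u v := by
        intro v hv
        induction hv with
        | refl => exact ⟨A, hA1, hAZ, .refl, Or.inl rfl, .refl⟩
        | @tail b c _ hbc ih =>
          obtain ⟨u, hu, huZ, hru, hb, hub⟩ := ih
          obtain ⟨hadj, hbZ, hcZ⟩ := hbc
          by_cases hc : c = u ∨ c ∈ Ignore D A Y L N
          · exact ⟨u, hu, huZ, hru, hc, hub.tail ⟨hadj, hb, hc⟩⟩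
          · push Not at hc
            have hcA : c ∈ ancAYL D A Y L := by
              rw [H0, moral, SimpleGraph.fromRel_adj] at hadj
              rcases hadj.2 with h | h
              · exact h.2.1
              · exact h.1
            have hc1 : c ∈ H1verts D A Y L N := ⟨hcA, hc.2⟩
            refine ⟨c, hc1, hcZ, hru.tail ⟨?_, huZ, hcZ⟩, Or.inl rfl, .refl⟩
            rw [H1, SimpleGraph.fromRel_adj]
            refine ⟨fun h => hc.1 h.symm, Or.inl ⟨hu, hc1, Or.inl ?_⟩⟩
            have hfull : Relation.ReflTransGen (fun a b => (H0 D A Y L).Adj a b ∧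
              (a = u ∨ a = c ∨ a ∈ Ignore D A Y L N) ∧
              (b = u ∨ b = c ∨ b ∈ Ignore D A Y L N)) u c :=
              Relation.ReflTransGen.tail (b := b)
                (aux_mono hub (fun x y h => ⟨h.1, h.2.1.imp id Or.inr, h.2.2.imp id Or.inr⟩))
                ⟨hadj, hb.imp id Or.inr, Or.inr (Or.inl rfl)⟩
            obtain ⟨p, hp, hP⟩ := aux_rtg_path
              (P := fun a => a = u ∨ a = c ∨ a ∈ Ignore D A Y L N) hfull (Or.inr (Or.inl rfl))
            refine ⟨p, hp, fun x hx h1 h2 => ?_⟩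
            rcases hP x hx with h | h | h
            · exact absurd h h1
            · exact absurd h h2
            · exact h
      obtain ⟨u, _, _, hru, hYu, _⟩ := inv Y hr
      have hYu' : Y = u := hYu.elim id (fun h => absurd h hY1.2)
      subst hYu'
      obtain ⟨p, hp, hP⟩ := aux_rtg_path (P := fun x => x ∉ Z) hru hYZ
      obtain ⟨z, hz, hzp⟩ := hcut p hp
      exact hP z hzp hz
    · ext z
      simp only [Set.mem_inter_iff, Set.mem_empty_iff_false, iff_false]
      rintro ⟨hz, hf⟩
      exact hZI z hz (Or.inr hf)

end CausalGraph
end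

section
/- Z is a minimal set satisfying the graphical adjustment criterion for A,Y,L,N in G (it satisfies the criterion and no proper subset of it does) if and only if Z is a minimal A–Y cut in H^1 (an A–Y cut no proper subset of which is an A–Y cut). -/
open Relation Set

namespace CausalGraph

section aux
variable {V : Type*}

def Cnd (E : V → V → Prop) (Z : Set V) (x y z : V) : Prop :=
  (E x y ∧ E z y → ∃ d ∈ Z, ReflTransGen E y d) ∧ (¬(E x y ∧ E z y) → y ∉ Z)

def Opn (E : V → V → Prop) (Z : Set V) : List V → Prop
  | x :: y :: z :: t => Cnd E Z x y z ∧ Opn E Z (y :: z :: t)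
  | _ => True

def Ad (E : V → V → Prop) (a b : V) : Prop := E a b ∨ E b a

theorem opn_iff (E : V → V → Prop) (Z : Set V) (p : List V) :
    Opn E Z p ↔ ∀ x y z, InteriorAt p x y z → Cnd E Z x y z := by
  induction p with
  | nil => simp [Opn, InteriorAt]
  | cons a p ih =>
    match p, ih with
    | [], _ =>
      simp only [Opn, true_iff]
      rintro x y z ⟨s, t, h⟩
      have := congrArg List.length h
      simp at this
      omega
    | [b], _ =>
      simp only [Opn, true_iff]
      rintro x y z ⟨s, t, h⟩
      have := congrArg List.length h
      simp at this
      omega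
    | b :: c :: t, ih =>
      rw [Opn, ih]
      constructor
      · rintro ⟨h1, h2⟩ x y z ⟨s, u, h⟩
        cases s with
        | nil =>
          simp at h
          obtain ⟨rfl, rfl, rfl, _⟩ := h
          exact h1
        | cons d s =>
          simp at h
          exact h2 x y z ⟨s, u, h.2⟩
      · intro h
        refine ⟨h _ _ _ ⟨[], t, rfl⟩, ?_⟩
        rintro x y z ⟨s, u, h'⟩
        exact h x y z ⟨a :: s, u, by simp [h']⟩

theorem opn_iff_not_blocked (E : V → V → Prop) (Z : Set V) (p : List V) :
    Opn E Z p ↔ ¬ Blocked E Z p := by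
  rw [opn_iff]
  unfold Blocked Cnd
  constructor
  · rintro h (⟨x, y, z, hi, hn, hz⟩ | ⟨x, y, z, hi, hn, hz⟩)
    · exact (h x y z hi).2 hn hz
    · obtain ⟨d, hd, hr⟩ := (h x y z hi).1 hn
      exact hz d ⟨y, rfl, hr⟩ hd
  · intro h x y z hi
    constructor
    · intro hc
      by_contra hcon
      refine h (Or.inr ⟨x, y, z, hi, hc, ?_⟩)
      rintro d ⟨y', rfl, hr⟩ hd
      exact hcon ⟨d, hd, hr⟩
    · intro hn hz
      exact h (Or.inl ⟨x, y, z, hi, hn, hz⟩)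

theorem opn_append (E : V → V → Prop) (Z : Set V) (s : List V) (y : V) (t : List V) :
    Opn E Z (s ++ y :: t) ↔ Opn E Z (s ++ [y]) ∧ Opn E Z (y :: t) ∧
      ∀ x ∈ s.getLast?, ∀ z ∈ t.head?, Cnd E Z x y z := by
  induction s with
  | nil => simp [Opn]
  | cons a s ih =>
    match s, ih with
    | [], _ =>
      cases t with
      | nil => simp [Opn]
      | cons z t => simp [Opn, and_comm]
    | [b], ih =>
      simp only [List.cons_append, List.nil_append, Opn] at ih ⊢
      rw [ih]
      simp [and_assoc]
    | b :: c :: s, ih =>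
      simp only [List.cons_append, Opn] at ih ⊢
      rw [ih]
      simp [and_assoc]

theorem dup_of_not_nodup (p : List V) (h : ¬ p.Nodup) :
    ∃ s v m t, p = s ++ v :: (m ++ v :: t) := by
  induction p with
  | nil => simp at h
  | cons a p ih =>
    by_cases ha : a ∈ p
    · obtain ⟨m, t, rfl⟩ := List.append_of_mem ha
      exact ⟨[], a, m, t, rfl⟩
    · have : ¬ p.Nodup := fun h' => h (List.nodup_cons.2 ⟨ha, h'⟩)
      obtain ⟨s, v, m, t, rfl⟩ := ih this
      exact ⟨a :: s, v, m, t, rfl⟩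

theorem loop_anc (E : V → V → Prop) (Z : Set V) (c : V) (m : List V) :
    ∀ v a, List.IsChain (Ad E) (v :: a :: (m ++ [c])) → Opn E Z (v :: a :: (m ++ [c])) →
      E v a → (∀ b ∈ (a :: m).getLast?, E c b) → ∃ d ∈ Z, ReflTransGen E v d := by
  induction m with
  | nil =>
    intro v a _ ho hva hl
    simp [Opn] at ho hl
    obtain ⟨d, hd, hr⟩ := ho.1 ⟨hva, hl⟩
    exact ⟨d, hd, hr.head hva⟩
  | cons u m ih =>
    intro v a hc ho hva hl
    simp only [List.cons_append, Opn, List.isChain_cons_cons] at ho hc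
    have key : ∃ d ∈ Z, ReflTransGen E a d := by
      by_cases hua : E u a
      · exact ho.1.1 ⟨hva, hua⟩
      · have hau : E a u := by
          rcases hc.2.1 with h | h
          · exact h
          · exact absurd h hua
        refine ih a u ?_ ho.2 hau ?_
        · simp only [List.isChain_cons_cons]; exact hc.2
        · intro b hb; exact hl b (by simpa using hb)
    obtain ⟨d, hd, hr⟩ := key
    exact ⟨d, hd, hr.head hva⟩

theorem cut_loop (E : V → V → Prop) (Z : Set V) (hac : Acyclic E) (s : List V) (v : V)
    (m t : List V) (hc : List.IsChain (Ad E) (s ++ v :: (m ++ v :: t)))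
    (ho : Opn E Z (s ++ v :: (m ++ v :: t))) :
    List.IsChain (Ad E) (s ++ v :: t) ∧ Opn E Z (s ++ v :: t) := by
  have hasym : ∀ a b, E a b → ¬ E b a := fun a b h h' => hac a b h (.single h')
  have hc1 := (List.isChain_split.1 hc)
  have hc2 : List.IsChain (Ad E) ((v :: m) ++ v :: t) := hc1.2
  have hc3 := List.isChain_split.1 hc2
  have ho1 := (opn_append E Z s v _).1 ho
  have ho2 : Opn E Z ((v :: m) ++ v :: t) := ho1.2.1
  have ho3 := (opn_append E Z (v :: m) v t).1 ho2
  refine ⟨List.isChain_split.2 ⟨hc1.1, hc3.2⟩, (opn_append E Z s v t).2 ⟨ho1.1, ho3.2.1, ?_⟩⟩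
  intro x hx z hz
  cases m with
  | nil =>
    exfalso
    have : Ad E v v := by
      have := hc3.1
      simpa using this
    rcases this with h | h <;> exact hasym _ _ h h
  | cons a m =>
    have c1 : Cnd E Z x v a := ho1.2.2 x hx a (by simp)
    obtain ⟨b, hb⟩ : ∃ b, b ∈ (a :: m).getLast? := by
      rw [List.getLast?_eq_some_getLast (by simp)]; exact ⟨_, rfl⟩
    have c2 : Cnd E Z b v z := ho3.2.2 b (by simpa using hb) z hz
    constructor
    · rintro ⟨h1, h2⟩
      by_cases ha : E a v
      · exact c1.1 ⟨h1, ha⟩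
      by_cases hb' : E b v
      · exact c2.1 ⟨hb', h2⟩
      have hch := hc3.1
      have hva : E v a := by
        have : Ad E v a := by
          simp only [List.cons_append, List.isChain_cons_cons] at hch
          exact hch.1
        exact this.resolve_right ha
      have hvb : E v b := by
        have := (List.isChain_append.1 hch).2.2 b (by simpa using hb) v (by simp)
        exact this.resolve_left hb'
      refine loop_anc E Z v m v a hch ho3.1 hva ?_
      intro b' hb''
      have : b = b' := by
        rw [Option.mem_def] at hb hb''
        rw [hb] at hb''; exact Option.some.inj hb''
      exact this ▸ hvb
    · intro h
      by_cases h1 : E x v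
      · exact c2.2 (fun h' => h ⟨h1, h'.2⟩)
      · exact c1.2 (fun h' => h1 h'.1)

/-- open walk (head `y`, last `S`) -/
def W (E : V → V → Prop) (Z : Set V) (S y : V) (l : List V) : Prop :=
  List.IsChain (Ad E) (y :: l) ∧ Opn E Z (y :: l) ∧ (y :: l).getLast? = some S

theorem W_to_path (E : V → V → Prop) (Z : Set V) (hac : Acyclic E) (S T : V) (l : List V)
    (h : W E Z S T l) :
    ∃ p : List V, List.IsChain (Ad E) p ∧ p.head? = some T ∧ p.getLast? = some S ∧ p.Nodup ∧
      Opn E Z p := by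
  obtain ⟨p, hp⟩ : ∃ p, p = T :: l := ⟨_, rfl⟩
  have h' : List.IsChain (Ad E) p ∧ p.head? = some T ∧ p.getLast? = some S ∧ Opn E Z p := by
    subst hp; exact ⟨h.1, rfl, h.2.2, h.2.1⟩
  clear hp h
  induction hn : p.length using Nat.strong_induction_on generalizing p with
  | _ n ih =>
    by_cases hnd : p.Nodup
    · exact ⟨p, h'.1, h'.2.1, h'.2.2.1, hnd, h'.2.2.2⟩
    · obtain ⟨s, v, m, t, rfl⟩ := dup_of_not_nodup p hnd
      obtain ⟨h1, h2, h3, h4⟩ := h'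
      obtain ⟨k1, k2⟩ := cut_loop E Z hac s v m t h1 h4
      refine ih (s ++ v :: t).length ?_ (s ++ v :: t) ⟨k1, ?_, ?_, k2⟩ rfl
      · subst hn; simp
      · cases s <;> simpa using h2
      · rw [← h3]
        have : s ++ v :: (m ++ v :: t) = (s ++ v :: m) ++ v :: t := by simp
        rw [this, List.getLast?_append_cons, List.getLast?_append_cons]

theorem W_cons (E : V → V → Prop) (Z : Set V) (S y z : V) (l : List V) (h : W E Z S y l)
    (ha : Ad E z y) (hc : ∀ x ∈ l.head?, Cnd E Z z y x) : W E Z S z (y :: l) := by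
  obtain ⟨h1, h2, h3⟩ := h
  refine ⟨List.isChain_cons_cons.2 ⟨ha, h1⟩, ?_, by simpa using h3⟩
  cases l with
  | nil => simp [Opn]
  | cons x l => exact ⟨hc x (by simp), h2⟩

theorem ext_step (E : V → V → Prop) (Z : Set V) (hac : Acyclic E) (S T y z : V) (l : List V)
    (hy : ReflTransGen E y S ∨ ReflTransGen E y T ∨ ∃ d ∈ Z, ReflTransGen E y d)
    (h : W E Z S y l) (ha : Ad E z y) (hz : y ∈ Z → E z y ∧ ∀ x ∈ l.head?, E x y) :
    (∃ l', W E Z S T l') ∨ ∃ l', W E Z S z (y :: l') := by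
  have hasym : ∀ a b, E a b → ¬ E b a := fun a b h h' => hac a b h (.single h')
  by_cases hd : ∃ d ∈ Z, ReflTransGen E y d
  · right
    refine ⟨l, W_cons E Z S y z l h ha fun x hx => ⟨fun _ => hd, fun hn hyz => ?_⟩⟩
    exact hn ⟨(hz hyz).1, (hz hyz).2 x hx⟩
  have hnz : ∀ c, ReflTransGen E y c → c ∉ Z := fun c hc hcz => hd ⟨c, hcz, hc⟩
  by_cases hcol : E z y ∧ ∀ x ∈ l.head?, E x y
  swap
  · right
    refine ⟨l, W_cons E Z S y z l h ha fun x hx => ⟨fun hh => ?_, fun _ => hnz y .refl⟩⟩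
    exfalso
    apply hcol
    refine ⟨hh.1, fun x' hx' => ?_⟩
    rw [Option.mem_def] at hx hx'
    rw [hx] at hx'
    cases hx'
    exact hh.2
  rcases hy with hy | hy | hy
  · right
    have key : ∀ c, ReflTransGen E c S → ReflTransGen E y c →
        ∃ l', W E Z S c l' ∧ ∀ x ∈ l'.head?, E c x := by
      intro c hc
      induction hc using ReflTransGen.head_induction_on with
      | refl => intro _; exact ⟨[], ⟨by simp, by simp [Opn], by simp⟩, by simp⟩
      | head hcd h_rest ih =>
        rename_i c d
        intro hyc
        obtain ⟨l', hw, hl⟩ := ih (hyc.tail hcd)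
        refine ⟨d :: l', W_cons E Z S d c l' hw (Or.inl hcd) fun x hx => ⟨fun hh => ?_, fun _ => ?_⟩, ?_⟩
        · exact absurd hh.2 (hasym _ _ (hl x hx))
        · exact hnz d (hyc.tail hcd)
        · simpa using hcd
    obtain ⟨l', hw, hl⟩ := key y hy .refl
    refine ⟨l', W_cons E Z S y z l' hw ha fun x hx => ⟨fun hh => ?_, fun _ => hnz y .refl⟩⟩
    exact absurd hh.2 (hasym _ _ (hl x hx))
  · left
    have key : ∃ l', W E Z S T l' ∧ ∀ x ∈ l'.head?, E x T := by
      clear hz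
      induction hy with
      | refl => exact ⟨l, h, hcol.2⟩
      | tail hyc hcd ih =>
        rename_i c d
        obtain ⟨l', hw, hl⟩ := ih
        refine ⟨c :: l', W_cons E Z S c d l' hw (Or.inr hcd) fun x hx => ⟨fun hh => ?_, fun _ => ?_⟩, ?_⟩
        · exact absurd hh.1 (hasym _ _ hcd)
        · exact hnz c hyc
        · simpa using hcd
    obtain ⟨l', hw, _⟩ := key
    exact ⟨l', hw⟩
  · exact absurd hy hd

/-- restricted relation -/
def Rs (R : V → V → Prop) (P : V → Prop) (a b : V) : Prop := R a b ∧ P a ∧ P b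

theorem Rs_symm (R : V → V → Prop) (hR : ∀ a b, R a b → R b a) (P : V → Prop) (a b : V)
    (h : ReflTransGen (Rs R P) a b) : ReflTransGen (Rs R P) b a := by
  induction h with
  | refl => exact .refl
  | tail h_prev h ih => exact ih.head ⟨hR _ _ h.1, h.2.2, h.2.1⟩

theorem path_iff (R : V → V → Prop) (P : V → Prop) (u v : V) :
    (∃ p : List V, IsPath R u v p ∧ ∀ x ∈ p, P x) ↔ P u ∧ ReflTransGen (Rs R P) u v := by
  constructor
  · rintro ⟨p, ⟨hc, hh, hl, -⟩, hP⟩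
    replace hc : List.IsChain R p := hc
    induction p generalizing u with
    | nil => simp at hh
    | cons a p ih =>
      simp at hh; subst hh
      refine ⟨hP a (by simp), ?_⟩
      cases p with
      | nil => simp at hl; subst hl; exact .refl
      | cons b p =>
        rw [List.isChain_cons_cons] at hc
        have := ih b (fun x hx => hP x (List.mem_cons_of_mem _ hx)) rfl (by simpa using hl) hc.2
        exact this.2.head ⟨hc.1, hP a (by simp), this.1⟩
  · rintro ⟨hu, h⟩
    induction h with
    | refl => exact ⟨[u], ⟨by change List.IsChain R [u]; simp, rfl, rfl, by simp⟩, by simpa using hu⟩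
    | tail h_prev h ih =>
      rename_i b w
      obtain ⟨p, ⟨hc, hh, hl, hn⟩, hP⟩ := ih
      replace hc : List.IsChain R p := hc
      by_cases hw : w ∈ p
      · obtain ⟨s, t, rfl⟩ := List.append_of_mem hw
        refine ⟨s ++ [w], ⟨(List.isChain_split.1 hc).1, ?_, by simp, ?_⟩, ?_⟩
        · cases s <;> simpa using hh
        · have : (s ++ [w]).Sublist (s ++ w :: t) := by simp
          exact hn.sublist this
        · intro x hx; apply hP; simp at hx ⊢; tauto
      · refine ⟨p ++ [w], ⟨?_, ?_, by simp, ?_⟩, ?_⟩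
        · change List.IsChain R (p ++ [w])
          rw [List.isChain_append]
          refine ⟨hc, by simp, ?_⟩
          intro x hx y hy
          rw [Option.mem_def, hl] at hx
          simp at hx hy
          subst hx hy
          exact h.1
        · cases p <;> simp_all
        · rw [List.nodup_append]; refine ⟨hn, by simp, ?_⟩
          intro a ha b hb; simp at hb; subst hb; rintro rfl; exact hw ha
        · intro x hx; simp at hx
          rcases hx with hx | rfl
          · exact hP x hx
          · exact h.2.2

/-- forward: open path has all vertices in `An`. -/
theorem all_in_An (E : V → V → Prop) (Z An : Set V) (hcl : ∀ a b, E a b → b ∈ An → a ∈ An)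
    (hZ : Z ⊆ An) (T : V) (hT : T ∈ An) (p : List V) :
    ∀ x, x ∈ An → List.IsChain (Ad E) (x :: p) → Opn E Z (x :: p) →
      (x :: p).getLast? = some T → ∀ y ∈ p, y ∈ An := by
  have hcl' : ∀ a b, ReflTransGen E a b → b ∈ An → a ∈ An := by
    intro a b h hb
    induction h using ReflTransGen.head_induction_on with
    | refl => exact hb
    | head h h_rest ih => exact hcl _ _ h ih
  have key : ∀ (t : List V) x y, E x y → List.IsChain (Ad E) (x :: y :: t) →
      Opn E Z (x :: y :: t) → (x :: y :: t).getLast? = some T → y ∈ An := by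
    intro t
    induction t with
    | nil => intro x y _ _ _ hl; simp at hl; exact hl ▸ hT
    | cons z t ih =>
      intro x y hxy hc ho hl
      rw [List.isChain_cons_cons] at hc
      by_cases hzy : E z y
      · obtain ⟨d, hd, hr⟩ := ho.1.1 ⟨hxy, hzy⟩
        exact hcl' _ _ hr (hZ hd)
      · have hyz : E y z := (List.isChain_cons_cons.1 hc.2).1.resolve_right hzy
        exact hcl _ _ hyz (ih y z hyz hc.2 ho.2 (by simpa using hl))
  induction p with
  | nil => simp
  | cons y p ih =>
    intro x hx hc ho hl
    have hc' := List.isChain_cons_cons.1 hc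
    have hy : y ∈ An := by
      rcases hc'.1 with h | h
      · exact key p x y h hc ho hl
      · exact hcl _ _ h hx
    have ho' : Opn E Z (y :: p) := by
      cases p with
      | nil => simp [Opn]
      | cons z p => exact ho.2
    intro w hw
    rcases List.mem_cons.1 hw with rfl | hw
    · exact hy
    · exact ih y hy hc'.2 ho' (by simpa using hl) w hw

theorem moral_adj (E : V → V → Prop) (An : Set V) (u v : V) : (moral E An).Adj u v ↔
    u ≠ v ∧ u ∈ An ∧ v ∈ An ∧ (E u v ∨ E v u ∨ ∃ w ∈ An, E u w ∧ E v w) := by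
  simp only [moral, SimpleGraph.fromRel_adj]
  constructor
  · rintro ⟨h, h' | h'⟩
    · exact ⟨h, h'⟩
    · obtain ⟨h1, h2, h3⟩ := h'
      refine ⟨h, h2, h1, ?_⟩
      rcases h3 with h3 | h3 | ⟨w, hw, h3, h4⟩
      · exact Or.inr (Or.inl h3)
      · exact Or.inl h3
      · exact Or.inr (Or.inr ⟨w, hw, h4, h3⟩)
  · rintro ⟨h, h'⟩
    exact ⟨h, Or.inl h'⟩

theorem open_to_moral (E : V → V → Prop) (Z An : Set V) (hac : Acyclic E) (T : V) (hT : T ∉ Z)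
    (n : ℕ) : ∀ (p : List V) x, p.length ≤ n → x ∉ Z → (∀ y ∈ x :: p, y ∈ An) →
      List.IsChain (Ad E) (x :: p) → Opn E Z (x :: p) → (x :: p).getLast? = some T →
      ReflTransGen (Rs (moral E An).Adj (· ∉ Z)) x T := by
  have hasym : ∀ a b, E a b → ¬ E b a := fun a b h h' => hac a b h (.single h')
  induction n with
  | zero =>
    intro p x hp _ _ _ _ hl
    have : p = [] := List.length_eq_zero_iff.1 (by omega)
    subst this
    simp at hl; subst hl; exact .refl
  | succ n ih =>
    intro p x hp hx hAn hc ho hl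
    match p, hp, hAn, hc, ho, hl with
    | [], _, _, _, _, hl => simp at hl; subst hl; exact .refl
    | [y], _, hAn, hc, ho, hl =>
      simp at hl; subst hl
      simp at hc hAn
      refine .single ⟨?_, hx, hT⟩
      rw [moral_adj]
      refine ⟨?_, hAn.1, hAn.2, ?_⟩
      · rintro rfl; rcases hc with h | h <;> exact hasym _ _ h h
      · rcases hc with h | h
        · exact Or.inl h
        · exact Or.inr (Or.inl h)
    | y :: z :: t, hp, hAn, hc, ho, hl =>
      simp only [List.isChain_cons_cons] at hc
      simp only [List.length_cons] at hp
      by_cases hcol : E x y ∧ E z y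
      · have hz : z ∉ Z := by
          cases t with
          | nil => simp at hl; exact hl ▸ hT
          | cons w t => exact ho.2.1.2 (fun h => hasym _ _ hcol.2 h.1)
        have ho' : Opn E Z (z :: t) := by
          cases t with
          | nil => simp [Opn]
          | cons w t => exact ho.2.2
        have := ih t z (by omega) hz (fun w hw => hAn w (by simp at hw ⊢; tauto)) hc.2.2 ho'
          (by simpa using hl)
        by_cases hxz : x = z
        · exact hxz ▸ this
        · refine this.head ⟨?_, hx, hz⟩
          rw [moral_adj]
          exact ⟨hxz, hAn x (by simp), hAn z (by simp),
            Or.inr (Or.inr ⟨y, hAn y (by simp), hcol⟩)⟩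
      · have hy : y ∉ Z := ho.1.2 hcol
        have := ih (z :: t) y (by simp; omega) hy (fun w hw => hAn w (by simp at hw ⊢; tauto))
          (List.isChain_cons_cons.2 hc.2) ho.2 (by simpa using hl)
        refine this.head ⟨?_, hx, hy⟩
        rw [moral_adj]
        refine ⟨?_, hAn x (by simp), hAn y (by simp), ?_⟩
        · rintro rfl; rcases hc.1 with h | h <;> exact hasym _ _ h h
        · rcases hc.1 with h | h
          · exact Or.inl h
          · exact Or.inr (Or.inl h)

theorem moral_to_open (E : V → V → Prop) (Z An : Set V) (hac : Acyclic E) (S T : V)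
    (hAn : ∀ y ∈ An, ReflTransGen E y S ∨ ReflTransGen E y T ∨ ∃ d ∈ Z, ReflTransGen E y d)
    (h : ReflTransGen (Rs (moral E An).Adj (· ∉ Z)) S T) : ∃ l, W E Z S T l := by
  have key : ∀ v, ReflTransGen (Rs (moral E An).Adj (· ∉ Z)) S v →
      (∃ l, W E Z S T l) ∨ ∃ l, W E Z S v l := by
    intro v hv
    induction hv with
    | refl => right; exact ⟨[], by simp, by simp [Opn], by simp⟩
    | tail h_prev hbc ih =>
      rename_i b c
      rcases ih with ih | ⟨l, hl⟩
      · exact Or.inl ih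
      obtain ⟨hadj, hb, hc⟩ := hbc
      rw [moral_adj] at hadj
      obtain ⟨-, hbA, hcA, hE⟩ := hadj
      have simple : Ad E c b → (∃ l, W E Z S T l) ∨ ∃ l, W E Z S c l := by
        intro ha
        rcases ext_step E Z hac S T b c l (hAn b hbA) hl ha (fun h => absurd h hb) with h | ⟨l', h⟩
        · exact Or.inl h
        · exact Or.inr ⟨_, h⟩
      rcases hE with hE | hE | ⟨w, hw, hbw, hcw⟩
      · exact simple (Or.inr hE)
      · exact simple (Or.inl hE)
      · rcases ext_step E Z hac S T b w l (hAn b hbA) hl (Or.inr hbw) (fun h => absurd h hb)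
          with h | ⟨l', h⟩
        · exact Or.inl h
        rcases ext_step E Z hac S T w c _ (hAn w hw) h (Or.inl hcw)
          (fun _ => ⟨hcw, by simpa using hbw⟩) with h | ⟨l'', h⟩
        · exact Or.inl h
        · exact Or.inr ⟨_, h⟩
  rcases key T h with h | h <;> exact h

theorem not_dsep_iff (E : V → V → Prop) (A Y : V) (Z : Set V) :
    ¬ DSep E {A} {Y} Z ↔ ∃ p, IsPath (Ad E) A Y p ∧ Opn E Z p := by
  unfold DSep
  simp only [mem_singleton_iff, forall_eq, not_forall, opn_iff_not_blocked, exists_prop]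
  rfl

theorem isPath_cons {R : V → V → Prop} {u v : V} {p : List V} (h : IsPath R u v p) :
    ∃ l, p = u :: l := by
  obtain ⟨_, hh, _⟩ := h
  cases p with
  | nil => simp at hh
  | cons a p => simp at hh; exact ⟨p, by rw [hh]⟩

theorem dsep_iff (E : V → V → Prop) (Z An : Set V) (hac : Acyclic E) (A Y : V)
    (hA : A ∈ An) (hY : Y ∈ An) (hAZ : A ∉ Z) (hYZ : Y ∉ Z) (hZ : Z ⊆ An)
    (hcl : ∀ a b, E a b → b ∈ An → a ∈ An)
    (hAn : ∀ y ∈ An, ReflTransGen E y A ∨ ReflTransGen E y Y ∨ ∃ d ∈ Z, ReflTransGen E y d) :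
    DSep E {A} {Y} Z ↔ ¬ ReflTransGen (Rs (moral E An).Adj (· ∉ Z)) A Y := by
  rw [← not_iff_not, not_dsep_iff, not_not]
  constructor
  · rintro ⟨p, hp, ho⟩
    obtain ⟨l, rfl⟩ := isPath_cons hp
    have hall := all_in_An E Z An hcl hZ Y hY l A hA hp.1 ho hp.2.2.1
    refine open_to_moral E Z An hac Y hYZ l.length l A le_rfl hAZ ?_ hp.1 ho hp.2.2.1
    intro y hy
    rcases List.mem_cons.1 hy with rfl | hy
    · exact hA
    · exact hall y hy
  · intro h
    have h' := Rs_symm _ (fun a b h => SimpleGraph.Adj.symm h) _ _ _ h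
    obtain ⟨l, hl⟩ := moral_to_open E Z An hac Y A (fun y hy => by have := hAn y hy; tauto) h'
    obtain ⟨p, h1, h2, h3, h4, h5⟩ := W_to_path E Z hac Y A l hl
    exact ⟨p, ⟨h1, h2, h3, h4⟩, h5⟩

theorem dsep_restrict (E : V → V → Prop) (Z An : Set V) (A Y : V)
    (hA : A ∈ An) (hY : Y ∈ An) (hcl : ∀ a b, E a b → b ∈ An → a ∈ An)
    (h : DSep E {A} {Y} Z) : DSep E {A} {Y} (Z ∩ An) := by
  by_contra hcon
  rw [not_dsep_iff] at hcon
  obtain ⟨p, hp, ho⟩ := hcon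
  refine (not_dsep_iff E A Y Z).2 ⟨p, hp, ?_⟩ h
  have hall : ∀ y ∈ p, y ∈ An := by
    obtain ⟨l, rfl⟩ := isPath_cons hp
    have hall := all_in_An E (Z ∩ An) An hcl inter_subset_right Y hY l A hA hp.1 ho hp.2.2.1
    intro y hy
    rcases List.mem_cons.1 hy with rfl | hy
    · exact hA
    · exact hall y hy
  rw [opn_iff] at ho ⊢
  intro x y z hi
  have := ho x y z hi
  refine ⟨fun hh => ?_, fun hh hy => ?_⟩
  · obtain ⟨d, hd, hr⟩ := this.1 hh
    exact ⟨d, hd.1, hr⟩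
  · refine this.2 hh ⟨hy, hall y ?_⟩
    obtain ⟨s, t, rfl⟩ := hi
    simp

end aux

theorem isCut_iff {V : Type*} (Vs : Set V) (H : SimpleGraph V) (A Y : V) (Z : Set V) :
    IsCut Vs H A Y Z ↔ Z ⊆ Vs ∧ A ∉ Z ∧ Y ∉ Z ∧ ¬ ReflTransGen (Rs H.Adj (· ∉ Z)) A Y := by
  unfold IsCut
  have e1 : Z ∩ {A, Y} = ∅ ↔ A ∉ Z ∧ Y ∉ Z := by
    constructor
    · intro h
      constructor <;> intro hz
      · have : A ∈ Z ∩ {A, Y} := ⟨hz, by simp⟩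
        rw [h] at this; exact this
      · have : Y ∈ Z ∩ {A, Y} := ⟨hz, by simp⟩
        rw [h] at this; exact this
    · rintro ⟨h1, h2⟩
      ext x
      simp only [mem_inter_iff, mem_insert_iff, mem_singleton_iff, mem_empty_iff_false, iff_false]
      rintro ⟨hx, rfl | rfl⟩ <;> contradiction
  rw [e1]
  have e2 := path_iff H.Adj (· ∉ Z) A Y
  constructor
  · rintro ⟨h1, ⟨h2, h3⟩, h4⟩
    refine ⟨h1, h2, h3, fun h => ?_⟩
    obtain ⟨p, hp, hP⟩ := e2.2 ⟨h2, h⟩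
    obtain ⟨z, hz, hzp⟩ := h4 p hp
    exact hP z hzp hz
  · rintro ⟨h1, h2, h3, h4⟩
    refine ⟨h1, ⟨h2, h3⟩, fun p hp => ?_⟩
    by_contra hcon
    push Not at hcon
    exact h4 (e2.1 ⟨p, hp, fun x hx hz => hcon x hz hx⟩).2

theorem stmt4 {V : Type*} [Fintype V] [DecidableEq V]
    (D : V → V → Prop) (hacy : Acyclic D)
    (A Y : V) (L N : Set V)
    (hAY : A ≠ Y) (hAancY : Relation.ReflTransGen D A Y)
    (hLnd : L ∩ desc D {A} = ∅) (hLY : Y ∉ L)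
    (hN : {A, Y} ∪ L ⊆ N)
    (Z : Set V) :
    MinimalGAC D A Y L N Z ↔ MinimalCut (H1verts D A Y L N) (H1 D A Y L N) A Y Z := by
  have hE : ∀ u v, ReflTransGen (pbd D A Y) u v → ReflTransGen D u v :=
    fun u v h => ReflTransGen.mono (fun a b h => h.1) _ _ h
  have hac : Acyclic (pbd D A Y) := fun u v h h' => hacy u v h.1 (hE _ _ h')
  have hcl : ∀ a b, pbd D A Y a b → b ∈ ancAYL D A Y L → a ∈ ancAYL D A Y L := by
    rintro a b h ⟨v, hv, hr⟩
    exact ⟨v, hv, hr.head h.1⟩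
  have hA : A ∈ ancAYL D A Y L := ⟨A, by simp, .refl⟩
  have hY : Y ∈ ancAYL D A Y L := ⟨Y, by simp, .refl⟩
  have hL : L ⊆ ancAYL D A Y L := fun l hl => ⟨l, by simp [hl], .refl⟩
  have hAL : A ∉ L := by
    intro h
    have : A ∈ L ∩ desc D {A} := ⟨h, A, rfl, .refl⟩
    rw [hLnd] at this; exact this
  have hdir : ∀ u v, ReflTransGen D u v →
      ReflTransGen (pbd D A Y) u A ∨ ReflTransGen (pbd D A Y) u v := by
    intro u v h
    induction h using ReflTransGen.head_induction_on with
    | refl => exact Or.inr .refl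
    | head h h_rest ih =>
      rename_i a b
      by_cases ha : a = A
      · subst ha; exact Or.inl .refl
      · have : pbd D A Y a b := ⟨h, fun h' => ha h'.1⟩
        rcases ih with ih | ih
        · exact Or.inl (ih.head this)
        · exact Or.inr (ih.head this)
  have hAforb : A ∈ forb D A Y := Or.inr rfl
  have hYforb : Y ∈ forb D A Y := Or.inl ⟨Y, ⟨hAY.symm, hAancY, .refl⟩, .refl⟩
  have hforb : forb D A Y ⊆ desc D {A} := by
    rintro v (⟨c, hc, hr⟩ | rfl)
    · exact ⟨A, rfl, hc.2.1.trans hr⟩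
    · exact ⟨v, rfl, .refl⟩
  have hLforb : ∀ l ∈ L, l ∉ forb D A Y := by
    intro l hl hf
    have : l ∈ L ∩ desc D {A} := ⟨hl, hforb hf⟩
    rw [hLnd] at this; exact this
  have hLv : L ⊆ H1verts D A Y L N := by
    intro l hl
    refine ⟨hL hl, ?_⟩
    rintro ⟨-, h | h⟩
    · exact h.2 (hN (Or.inr hl))
    · exact hLforb l hl h
  have hAv : A ∈ H1verts D A Y L N := ⟨hA, fun h => h.1.2 (by simp)⟩
  have hYv : Y ∈ H1verts D A Y L N := ⟨hY, fun h => h.1.2 (by simp)⟩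
  -- H1 vs H0
  have hcut : ∀ Z : Set V, Z ⊆ H1verts D A Y L N → A ∉ Z → Y ∉ Z →
      (¬ ReflTransGen (Rs (H1 D A Y L N).Adj (· ∉ Z)) A Y ↔
        L ⊆ Z ∧ ¬ ReflTransGen (Rs (H0 D A Y L).Adj (· ∉ Z)) A Y) := by
    intro Z hZv hAZ hYZ
    have hsym0 : ∀ a b, (H0 D A Y L).Adj a b → (H0 D A Y L).Adj b a := fun a b h => h.symm
    constructor
    · intro h
      constructor
      · intro l hl
        by_contra hlZ
        have hlA : A ≠ l := by rintro rfl; exact hAL hl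
        have hlY : l ≠ Y := by rintro rfl; exact hLY hl
        have a1 : (H1 D A Y L N).Adj A l := by
          rw [H1, SimpleGraph.fromRel_adj]
          exact ⟨hlA, Or.inl ⟨hAv, hLv hl, Or.inr (Or.inl ⟨rfl, hl⟩)⟩⟩
        have a2 : (H1 D A Y L N).Adj l Y := by
          rw [H1, SimpleGraph.fromRel_adj]
          exact ⟨hlY, Or.inr ⟨hYv, hLv hl, Or.inr (Or.inr ⟨rfl, hl⟩)⟩⟩
        exact h ((ReflTransGen.single ⟨a1, hAZ, hlZ⟩).tail ⟨a2, hlZ, hYZ⟩)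
      · intro h0
        apply h
        have key : ∀ w, ReflTransGen (Rs (H0 D A Y L).Adj (· ∉ Z)) A w →
            ∃ u, u ∈ H1verts D A Y L N ∧ u ∉ Z ∧
              ReflTransGen (Rs (H1 D A Y L N).Adj (· ∉ Z)) A u ∧
              ReflTransGen (Rs (H0 D A Y L).Adj (fun x => x ∈ Ignore D A Y L N ∨ x = u)) u w ∧
              (w ∈ Ignore D A Y L N ∨ w = u) := by
          intro w hw
          induction hw with
          | refl => exact ⟨A, hAv, hAZ, .refl, .refl, Or.inr rfl⟩
          | tail h_prev hbc ih =>
            rename_i b c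
            obtain ⟨u, hu, huZ, h1, h2, h3⟩ := ih
            by_cases hcI : c ∈ Ignore D A Y L N
            · exact ⟨u, hu, huZ, h1, h2.tail ⟨hbc.1, h3, Or.inl hcI⟩, Or.inl hcI⟩
            by_cases hcu : c = u
            · exact ⟨u, hu, huZ, h1, hcu ▸ .refl, Or.inr hcu⟩
            have hcv : c ∈ H1verts D A Y L N := by
              have := hbc.1
              rw [H0, moral_adj] at this
              exact ⟨this.2.2.1, hcI⟩
            refine ⟨c, hcv, hbc.2.2, h1.tail ⟨?_, huZ, hbc.2.2⟩, .refl, Or.inr rfl⟩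
            rw [H1, SimpleGraph.fromRel_adj]
            refine ⟨fun h => hcu h.symm, Or.inl ⟨hu, hcv, Or.inl ?_⟩⟩
            have h4 : ReflTransGen (Rs (H0 D A Y L).Adj
                (fun x => x ∈ Ignore D A Y L N ∨ x = u ∨ x = c)) u c := by
              refine ReflTransGen.tail (ReflTransGen.mono ?_ _ _ h2)
                ⟨hbc.1, by tauto, by tauto⟩
              rintro a b ⟨h5, h6, h7⟩
              exact ⟨h5, by tauto, by tauto⟩
            obtain ⟨p, hp, hP⟩ := (path_iff _ _ u c).2 ⟨Or.inr (Or.inl rfl), h4⟩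
            refine ⟨p, hp, fun x hx h5 h6 => ?_⟩
            have := hP x hx
            tauto
        obtain ⟨u, hu, huZ, h1, -, h3⟩ := key Y h0
        rcases h3 with h3 | h3
        · exact absurd h3 hYv.2
        · subst h3; exact h1
    · rintro ⟨hLZ, h0⟩ h1
      apply h0
      have hedge : ∀ u v, u ∉ Z → v ∉ Z →
          (∃ p : List V, IsPath (H0 D A Y L).Adj u v p ∧
            ∀ x ∈ p, x ≠ u → x ≠ v → x ∈ Ignore D A Y L N) →
          ReflTransGen (Rs (H0 D A Y L).Adj (· ∉ Z)) u v := by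
        rintro u v hu hv ⟨p, hp, hP⟩
        refine ((path_iff _ (· ∉ Z) u v).1 ⟨p, hp, fun x hx hxZ => ?_⟩).2
        by_cases h1 : x = u
        · exact hu (h1 ▸ hxZ)
        by_cases h2 : x = v
        · exact hv (h2 ▸ hxZ)
        exact (hZv hxZ).2 (hP x hx h1 h2)
      have gen : ∀ w, ReflTransGen (Rs (H1 D A Y L N).Adj (· ∉ Z)) A w →
          ReflTransGen (Rs (H0 D A Y L).Adj (· ∉ Z)) A w := by
        intro w hw
        induction hw with
        | refl => exact .refl
        | tail h_prev hbc ih =>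
          refine ih.trans ?_
          obtain ⟨hadj, hb, hc⟩ := hbc
          rw [H1, SimpleGraph.fromRel_adj] at hadj
          rcases hadj.2 with ⟨-, -, h | h | h⟩ | ⟨-, -, h | h | h⟩
          · exact hedge _ _ hb hc h
          · exact absurd (hLZ h.2) hc
          · exact absurd (hLZ h.2) hc
          · exact Rs_symm _ hsym0 _ _ _ (hedge _ _ hc hb h)
          · exact absurd (hLZ h.2) hb
          · exact absurd (hLZ h.2) hb
      exact gen Y h1
  have main : ∀ Z : Set V, Z ⊆ ancAYL D A Y L →
      (GAC D A Y L N Z ↔ IsCut (H1verts D A Y L N) (H1 D A Y L N) A Y Z) := by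
    intro Z hZ
    have hds : A ∉ Z → Y ∉ Z → L ⊆ Z → (DSep (pbd D A Y) {A} {Y} Z ↔
        ¬ ReflTransGen (Rs (H0 D A Y L).Adj (· ∉ Z)) A Y) := by
      intro hAZ hYZ hLZ
      refine dsep_iff (pbd D A Y) Z (ancAYL D A Y L) hac A Y hA hY hAZ hYZ hZ hcl ?_
      rintro y ⟨v, hv, hr⟩
      rcases hdir y v hr with h | h
      · exact Or.inl h
      · rcases hv with (rfl | rfl) | hv
        · exact Or.inl h
        · exact Or.inr (Or.inl h)
        · exact Or.inr (Or.inr ⟨v, hLZ hv, h⟩)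
    rw [isCut_iff]
    constructor
    · rintro ⟨h1, h2, h3, h4⟩
      have hf : ∀ z ∈ Z, z ∉ forb D A Y := by
        intro z hz hf
        have : z ∈ Z ∩ forb D A Y := ⟨hz, hf⟩
        rw [h2] at this; exact this
      have hAZ : A ∉ Z := fun h => hf A h hAforb
      have hYZ : Y ∉ Z := fun h => hf Y h hYforb
      have hZv : Z ⊆ H1verts D A Y L N := by
        intro z hz
        refine ⟨hZ hz, ?_⟩
        rintro ⟨-, h | h⟩
        · exact h.2 (h4 hz)
        · exact hf z hz h
      exact ⟨hZv, hAZ, hYZ, (hcut Z hZv hAZ hYZ).2 ⟨h3, (hds hAZ hYZ h3).1 h1⟩⟩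
    · rintro ⟨hZv, hAZ, hYZ, h⟩
      obtain ⟨hLZ, h0⟩ := (hcut Z hZv hAZ hYZ).1 h
      have hmem : ∀ z ∈ Z, z ∈ N ∧ z ∉ forb D A Y := by
        intro z hz
        have h1 := hZv hz
        have h2 : z ∉ ({A, Y} : Set V) := by
          rintro (rfl | rfl)
          · exact hAZ hz
          · exact hYZ hz
        constructor
        · by_contra hn
          exact h1.2 ⟨⟨h1.1, h2⟩, Or.inl ⟨trivial, hn⟩⟩
        · intro hn
          exact h1.2 ⟨⟨h1.1, h2⟩, Or.inr hn⟩
      refine ⟨(hds hAZ hYZ hLZ).2 h0, ?_, hLZ, fun z hz => (hmem z hz).1⟩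
      ext z
      simp only [mem_inter_iff, mem_empty_iff_false, iff_false]
      exact fun hz => (hmem z hz.1).2 hz.2
  constructor
  · rintro ⟨hg, hmin⟩
    have hZ : Z ⊆ ancAYL D A Y L := by
      by_contra hcon
      refine hmin (Z ∩ ancAYL D A Y L) ⟨inter_subset_left, fun h => hcon (h.trans inter_subset_right)⟩ ?_
      obtain ⟨h1, h2, h3, h4⟩ := hg
      refine ⟨dsep_restrict _ _ _ A Y hA hY hcl h1, ?_, subset_inter h3 hL,
        inter_subset_left.trans h4⟩
      refine subset_eq_empty ?_ h2
      exact inter_subset_inter_left _ inter_subset_left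
    exact ⟨(main Z hZ).1 hg, fun Z' hZ' hc => hmin Z' hZ' ((main Z' (hZ'.1.trans hZ)).2 hc)⟩
  · rintro ⟨hg, hmin⟩
    have hZ : Z ⊆ ancAYL D A Y L := fun z hz => (hg.1 hz).1
    exact ⟨(main Z hZ).2 hg, fun Z' hZ' hc => hmin Z' hZ' ((main Z' (hZ'.1.trans hZ)).1 hc)⟩

end CausalGraph
end
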